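/- Let k : (0,∞) → [0,∞) be nonincreasing with ∫₀¹ k(r) dr < ∞, set K(x) = k(|x|) for x ∈ ℝ² \ {0}, and assume K is positive definite, i.e. ∫_{ℝ²}∫_{ℝ²} K(x − y) f(x) f(y) dx dy ≥ 0 for every continuous compactly supported f : ℝ² → ℝ. Define the Riesz-type energy 𝓡(E) = −∫_E ∫_E K(x − y) dx dy. Then, for any regular hexagon H* with |H*| = 1, 𝓡(H*) ≤ 𝓡(H) for every H ∈ 𝓗 with |H| = 1 (equivalently, the regular hexagon maximizes ∫_E∫_E K(x−y) dx dy among unit-area elements of 𝓗). Moreover, if in addition k is strictly decreasing on (0,∞), then every minimizer of 𝓡 among unit-area elements of 𝓗 is a regular hexagon. -/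

import Mathlib

open MeasureTheory Metric Filter Real Set
open scoped Topology ENNReal NNReal RealInnerProductSpace

noncomputable section

/-- The Euclidean plane. -/
abbrev E2 : Type := EuclideanSpace ℝ (Fin 2)

/-- The line through `x` with direction `v`. -/
def lineThrough (x v : E2) : Set E2 := {y : E2 | ∃ t : ℝ, y = x + t • v}

/-- Steiner symmetrization of `A` with respect to the affine line `{x | ⟪x, v⟫ = c}`,
where `v` is a unit normal vector of the line. -/
def steiner (v : E2) (c : ℝ) (A : Set E2) : Set E2 :=
  {y : E2 | ∃ x : E2, ⟪x, v⟫ = c ∧ (A ∩ lineThrough x v).Nonempty ∧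
    ∃ r : ℝ, y = x + r • v ∧
      ENNReal.ofReal (2 * |r|) ≤ μH[1] (A ∩ lineThrough x v)}

/-- The class `𝓗` of centrally symmetric convex hexagons (possibly degenerated to
parallelograms), i.e. the convex polygons tiling the plane by translations. -/
def Hex (H : Set E2) : Prop :=
  (∃ x₀ p q r : E2, H = (fun y => x₀ + y) '' convexHull ℝ ({p, q, r, -p, -q, -r} : Set E2)) ∧
  (interior H).Nonempty

/-- The `k`-th vertex of the standard regular hexagon. -/
def hexVertex (k : ℕ) : E2 :=
  (WithLp.equiv 2 (Fin 2 → ℝ)).symm ![Real.cos (k * π / 3), Real.sin (k * π / 3)]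

/-- The standard regular hexagon, with vertices `(cos (kπ/3), sin (kπ/3))`, `k = 0, …, 5`. -/
def stdHexagon : Set E2 := convexHull ℝ (Set.range fun k : Fin 6 => hexVertex k)

/-- A similarity of the plane (composition of a rotation, a dilation and a translation,
possibly with a reflection). -/
def IsSimilarity (f : E2 → E2) : Prop :=
  ∃ s : ℝ, 0 < s ∧ ∀ x y, dist (f x) (f y) = s * dist x y

/-- A regular hexagon is any image of the standard one under a similarity. -/
def IsRegularHexagon (H : Set E2) : Prop := ∃ f : E2 → E2, IsSimilarity f ∧ H = f '' stdHexagon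

/-- Convergence of a sequence of sets in the Hausdorff distance. -/
def HausdorffTendsto (Hn : ℕ → Set E2) (H : Set E2) : Prop :=
  Tendsto (fun n => EMetric.hausdorffEdist (Hn n) H) atTop (𝓝 0)

/-- The planar cross product (determinant) of two vectors. -/
def det2 (u w : E2) : ℝ := u 0 * w 1 - u 1 * w 0

/-- `A, B, C, D, E, F` are (consecutive) vertices of the centrally symmetric hexagon `H`:
`H` is their convex hull, `D, E, F` are the antipodes of `A, B, C` with respect to a center
`o`, and `H` has nonempty interior. -/
def HexWithVertices (A B C D E F : E2) (H : Set E2) : Prop :=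
  H = convexHull ℝ ({A, B, C, D, E, F} : Set E2) ∧
  (∃ o : E2, D = (2:ℝ) • o - A ∧ E = (2:ℝ) • o - B ∧ F = (2:ℝ) • o - C) ∧
  (interior H).Nonempty

/-- The vertices `A, B, C, D, E, F` are listed in counterclockwise order. -/
def CCWList (A B C D E F : E2) : Prop :=
  0 ≤ det2 (B - A) (C - B) ∧ 0 ≤ det2 (C - B) (D - C) ∧ 0 ≤ det2 (D - C) (E - D) ∧
  0 ≤ det2 (E - D) (F - E) ∧ 0 ≤ det2 (F - E) (A - F) ∧ 0 ≤ det2 (A - F) (B - A)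

/-- The six vertices are distinct and no three of them are collinear. -/
def NondegenerateHex (A B C D E F : E2) : Prop :=
  [A, B, C, D, E, F].Pairwise (· ≠ ·) ∧
  ∀ P Q R : E2, P ∈ ({A, B, C, D, E, F} : Set E2) → Q ∈ ({A, B, C, D, E, F} : Set E2) →
    R ∈ ({A, B, C, D, E, F} : Set E2) → P ≠ Q → P ≠ R → Q ≠ R →
      ¬ Collinear ℝ ({P, Q, R} : Set E2)

/-- The Riesz-type interaction energy associated with the radial kernel `K(x) = k(|x|)`. -/
def rieszEnergy (k : ℝ → ℝ) (E : Set E2) : ℝ :=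
  -∫ x in E, ∫ y in E, k (dist x y)

/-!
By compactness, a maximizer of the interaction exists among the hexagons of given area contained in
a given ball. Let `A`, `B`, `C`, `-A`, `-B`, `-C` be the vertices of a hexagon in cyclic order. In a
direction parallel to the diagonal `A - C` every chord of the hexagon is an interval, and Steiner
symmetrization, which centers these intervals on one line, again gives a centrally symmetric hexagon
of the same area and of no larger diameter. By the one-dimensional Riesz rearrangement inequality
for two intervals it increases the interaction strictly, unless the chords were centered already.
A hexagon left unchanged by two of these symmetrizations is regular. A kernel that is not strictly
decreasing is perturbed by `ε * exp (-r)`.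
-/

lemma setLIntegral_lt_setLIntegral_of_diff {α : Type*} [MeasurableSpace α] {μ : Measure α}
    {f : α → ℝ≥0∞} {A B : Set α} {M : ℝ≥0∞} (hA : MeasurableSet A) (hB : MeasurableSet B)
    (hAB : μ A = μ B) (hB_top : μ B ≠ ⊤) (hdiff : μ (B \ A) ≠ 0) (hfB : ∫⁻ x in B, f x ∂μ ≠ ⊤)
    (hf_lt : ∀ x ∈ B \ A, f x < M) (hle_f : ∀ x ∈ A \ B, M ≤ f x) :
    ∫⁻ x in B, f x ∂μ < ∫⁻ x in A, f x ∂μ := by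
  have hdiff_eq : μ (B \ A) = μ (A \ B) := by
    refine (ENNReal.add_right_inj (measure_ne_top_of_subset inter_subset_right hB_top :
      μ (A ∩ B) ≠ ⊤)).1 ?_
    rw [measure_inter_add_sdiff A hB, inter_comm, measure_inter_add_sdiff B hA, hAB]
  have hfBA : ∫⁻ x in B \ A, f x ∂μ ≠ ⊤ := ne_top_of_le_ne_top hfB (lintegral_mono_set sdiff_subset)
  have hdiff_lt : ∫⁻ x in B \ A, f x ∂μ < ∫⁻ x in A \ B, f x ∂μ := calc
    ∫⁻ x in B \ A, f x ∂μ < ∫⁻ _ in B \ A, M ∂μ :=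
      setLIntegral_strict_mono (hB.diff hA) hdiff measurable_const hfBA
        (Eventually.of_forall hf_lt)
    _ = ∫⁻ _ in A \ B, M ∂μ := by simp only [setLIntegral_const, hdiff_eq]
    _ ≤ ∫⁻ x in A \ B, f x ∂μ := setLIntegral_mono' (hA.diff hB) hle_f
  rw [← lintegral_inter_add_sdiff f B hA, ← lintegral_inter_add_sdiff f A hB, inter_comm A B]
  exact ENNReal.add_lt_add_left
    (ne_top_of_le_ne_top hfB (lintegral_mono_set inter_subset_left)) hdiff_lt

lemma setLIntegral_closedBall_comp_sub (f : ℝ → ℝ≥0∞) (x c r : ℝ) :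
    ∫⁻ y in closedBall c r, f (x - y) = ∫⁻ u in closedBall (x - c) r, f u := by
  have hpreimage : closedBall c r = (x - ·) ⁻¹' closedBall (x - c) r := by
    ext y
    rw [mem_preimage, mem_closedBall', mem_closedBall, dist_sub_left, dist_comm]
  rw [hpreimage]
  exact (Measure.measurePreserving_sub_left volume x).setLIntegral_comp_preimage_emb
    (MeasurableEquiv.subLeft x).measurableEmbedding f _

lemma setLIntegral_closedBall_comp_sub_right (f : ℝ → ℝ≥0∞) (x c r : ℝ) :
    ∫⁻ y in closedBall c r, f (y - x) = ∫⁻ u in closedBall (c - x) r, f u := by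
  have hpreimage : closedBall c r = (· - x) ⁻¹' closedBall (c - x) r := by
    ext y
    simp [Real.dist_eq]
  rw [hpreimage]
  exact (measurePreserving_sub_right volume x).setLIntegral_comp_preimage_emb
    (MeasurableEquiv.subRight x).measurableEmbedding f _

/-- Even, finite `[0, ∞]`-valued functions on the line that decrease strictly on `[0, ∞)`: the
one-dimensional kernels obtained by slicing a radial kernel at a positive height. -/
structure EvenStrictAnti (φ : ℝ → ℝ≥0∞) : Prop where
  even : ∀ x, φ (-x) = φ x
  anti : StrictAntiOn φ (Ici 0)
  zero_ne_top : φ 0 ≠ ⊤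

namespace EvenStrictAnti

variable {φ : ℝ → ℝ≥0∞}

lemma apply_abs (h : EvenStrictAnti φ) (x : ℝ) : φ |x| = φ x := by
  rcases abs_choice x with hx | hx <;> rw [hx]
  exact h.even x

lemma lt_of_abs_lt (h : EvenStrictAnti φ) {x y : ℝ} (hxy : |x| < |y|) : φ y < φ x := by
  rw [← h.apply_abs x, ← h.apply_abs y]
  exact h.anti (mem_Ici.2 (abs_nonneg _)) (mem_Ici.2 (abs_nonneg _)) hxy

lemma le_of_abs_le (h : EvenStrictAnti φ) {x y : ℝ} (hxy : |x| ≤ |y|) : φ y ≤ φ x := by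
  rw [← h.apply_abs x, ← h.apply_abs y]
  exact h.anti.antitoneOn (mem_Ici.2 (abs_nonneg _)) (mem_Ici.2 (abs_nonneg _)) hxy

lemma lintegral_closedBall_ne_top (h : EvenStrictAnti φ) (x b : ℝ) :
    ∫⁻ u in closedBall x b, φ u ≠ ⊤ := by
  refine ne_top_of_le_ne_top ?_
    (setLIntegral_mono' measurableSet_closedBall fun u _ => h.le_of_abs_le (x := 0) (by simp))
  rw [setLIntegral_const]
  exact ENNReal.mul_ne_top h.zero_ne_top measure_closedBall_lt_top.ne

lemma window (h : EvenStrictAnti φ) {b : ℝ} (hb : 0 < b) :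
    EvenStrictAnti fun x => ∫⁻ u in closedBall x b, φ u where
  even x := by
    have hreflect := setLIntegral_closedBall_comp_sub φ 0 x b
    simp only [zero_sub, h.even] at hreflect
    exact hreflect.symm
  anti x hx y _ hxy := by
    rw [mem_Ici] at hx
    simp only [Real.closedBall_eq_Icc]
    have hdiff : Ioo (max (x + b) (y - b)) (y + b) ⊆ Icc (y - b) (y + b) \ Icc (x - b) (x + b) :=
      fun u hu => ⟨⟨(le_max_right _ _).trans hu.1.le, hu.2.le⟩,
        fun hu' => hu'.2.not_gt ((le_max_left _ _).trans_lt hu.1)⟩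
    refine setLIntegral_lt_setLIntegral_of_diff (M := φ (x + b)) measurableSet_Icc
      measurableSet_Icc ?_ measure_Icc_lt_top.ne ?_ ?_ ?_ ?_
    · simp only [Real.volume_Icc, add_sub_sub_cancel]
    · refine (measure_pos_of_superset hdiff ?_).ne'
      rw [Real.volume_Ioo, ne_eq, ENNReal.ofReal_eq_zero, not_le, sub_pos]
      exact max_lt (by linarith) (by linarith)
    · simpa only [Real.closedBall_eq_Icc] using h.lintegral_closedBall_ne_top y b
    · rintro u ⟨⟨hu₁, -⟩, hu⟩
      have hxu : x + b < u := by
        by_contra! hle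
        exact hu ⟨by linarith, hle⟩
      exact h.lt_of_abs_lt (by rwa [abs_of_nonneg (by linarith), abs_of_pos (by linarith)])
    · rintro u ⟨⟨hu₁, hu₂⟩, -⟩
      refine h.le_of_abs_le ?_
      rw [abs_of_nonneg (by linarith : 0 ≤ x + b), abs_le]
      exact ⟨by linarith, hu₂⟩
  zero_ne_top := h.lintegral_closedBall_ne_top 0 b

lemma lintegral_closedBall_closedBall (a b c d : ℝ) :
    ∫⁻ x in closedBall c a, ∫⁻ x' in closedBall d b, φ (x - x') =
      ∫⁻ v in closedBall (c - d) a, ∫⁻ u in closedBall v b, φ u := by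
  simp only [setLIntegral_closedBall_comp_sub]
  exact setLIntegral_closedBall_comp_sub_right (fun v => ∫⁻ u in closedBall v b, φ u) d c a

lemma lintegral_closedBall_closedBall_lt (h : EvenStrictAnti φ) {a b c d : ℝ} (ha : 0 < a)
    (hb : 0 < b) (hcd : c ≠ d) :
    ∫⁻ x in closedBall c a, ∫⁻ x' in closedBall d b, φ (x - x') <
      ∫⁻ x in closedBall 0 a, ∫⁻ x' in closedBall 0 b, φ (x - x') := by
  simp only [lintegral_closedBall_closedBall, sub_self]
  refine ((h.window hb).window ha).lt_of_abs_lt ?_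
  rwa [abs_zero, abs_pos, sub_ne_zero]

lemma lintegral_closedBall_closedBall_le (h : EvenStrictAnti φ) (a b c d : ℝ) :
    ∫⁻ x in closedBall c a, ∫⁻ x' in closedBall d b, φ (x - x') ≤
      ∫⁻ x in closedBall 0 a, ∫⁻ x' in closedBall 0 b, φ (x - x') := by
  have hnull {r : ℝ} (hr : r ≤ 0) (e : ℝ) : volume.restrict (closedBall e r) = 0 := by
    rw [Measure.restrict_eq_zero, Real.volume_closedBall, ENNReal.ofReal_eq_zero]
    linarith
  rcases le_or_gt a 0 with ha | ha
  · simp only [hnull ha, lintegral_zero_measure, le_refl]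
  rcases le_or_gt b 0 with hb | hb
  · simp only [hnull hb, lintegral_zero_measure, lintegral_zero, le_refl]
  rcases eq_or_ne c d with rfl | hcd
  · simp only [lintegral_closedBall_closedBall, sub_self, le_refl]
  · exact (h.lintegral_closedBall_closedBall_lt ha hb hcd).le

end EvenStrictAnti

/-- The interaction `∫_H ∫_H κ(|x - y|) dy dx` of a set with itself. Kernels take values in `[0, ∞]`
so that it is always defined and monotone. -/
def interaction {E : Type*} [MeasureSpace E] [Dist E] (κ : ℝ → ℝ≥0∞) (H : Set E) : ℝ≥0∞ :=
  ∫⁻ x in H, ∫⁻ y in H, κ (dist x y)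

section AffineIsometry

variable {E : Type*} [NormedAddCommGroup E] [InnerProductSpace ℝ E] [FiniteDimensional ℝ E]
  [MeasurableSpace E] [BorelSpace E]

lemma measurePreserving_affineIsometryEquiv (T : E ≃ᵃⁱ[ℝ] E) :
    MeasurePreserving T (volume : Measure E) volume := by
  have hT : ⇑T = (T 0 + ·) ∘ T.linearIsometryEquiv := by
    funext x
    simpa [add_comm] using T.map_vadd 0 x
  rw [hT]
  exact (measurePreserving_add_left volume (T 0)).comp T.linearIsometryEquiv.measurePreserving

lemma volume_image_affineIsometryEquiv (T : E ≃ᵃⁱ[ℝ] E) (H : Set E) :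
    volume (T '' H) = volume H := by
  rw [← (measurePreserving_affineIsometryEquiv T).measure_preimage_emb
    T.toHomeomorph.measurableEmbedding, T.injective.preimage_image]

lemma interaction_image_affineIsometryEquiv (κ : ℝ → ℝ≥0∞) (T : E ≃ᵃⁱ[ℝ] E) (H : Set E) :
    interaction κ (T '' H) = interaction κ H := by
  have hT := measurePreserving_affineIsometryEquiv T
  have hT' : MeasurableEmbedding T := T.toHomeomorph.measurableEmbedding
  simp only [interaction, ← hT.setLIntegral_comp_emb hT', T.dist_map]

end AffineIsometry

/-- Nonincreasing profiles `κ : ℝ → [0, ∞]` whose radial kernel `κ(|x|)` is locally integrable in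
the plane; the value `∞` is allowed at (and below) the origin. -/
structure IsRieszKernel (κ : ℝ → ℝ≥0∞) : Prop where
  antitone : Antitone κ
  lintegral_ball_lt_top : ∀ ρ, ∫⁻ z in ball (0 : E2) ρ, κ ‖z‖ < ⊤

namespace IsRieszKernel

variable {κ : ℝ → ℝ≥0∞}

lemma measurable (hκ : IsRieszKernel κ) : Measurable κ :=
  hκ.antitone.measurable

lemma ne_top (hκ : IsRieszKernel κ) {r : ℝ} (hr : 0 < r) : κ r ≠ ⊤ := by
  intro htop
  refine (hκ.lintegral_ball_lt_top r).ne (top_unique ?_)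
  calc ⊤ = ∫⁻ _ in ball (0 : E2) r, ⊤ := by
        rw [setLIntegral_const, ENNReal.top_mul (measure_ball_pos volume 0 hr).ne']
    _ ≤ ∫⁻ z in ball (0 : E2) r, κ ‖z‖ := setLIntegral_mono' measurableSet_ball fun z hz =>
        htop.ge.trans (hκ.antitone (mem_ball_zero_iff.1 hz).le)

lemma lintegral_ball_dist (hκ : IsRieszKernel κ) (x : E2) (ρ : ℝ) :
    ∫⁻ y in ball x ρ, κ (dist x y) = ∫⁻ z in ball (0 : E2) ρ, κ ‖z‖ := by
  have hκm := hκ.measurable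
  rw [← (measurePreserving_add_left (volume : Measure E2) x).setLIntegral_comp_preimage
    (s := ball x ρ) measurableSet_ball (f := fun y => κ (dist x y)) (by fun_prop)]
  simp

lemma lintegral_ne_top (hκ : IsRieszKernel κ) {H : Set E2} (hH : Bornology.IsBounded H) (x : E2) :
    ∫⁻ y in H, κ (dist x y) ≠ ⊤ := by
  obtain ⟨ρ, hρ⟩ := hH.subset_ball x
  refine ((lintegral_mono_set hρ).trans_lt ?_).ne
  rw [hκ.lintegral_ball_dist]
  exact hκ.lintegral_ball_lt_top ρ

lemma measurable_lintegral (hκ : IsRieszKernel κ) (H : Set E2) :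
    Measurable fun x : E2 => ∫⁻ y in H, κ (dist x y) := by
  have hκm := hκ.measurable
  exact Measurable.lintegral_prod_right' (f := fun p : E2 × E2 => κ (dist p.1 p.2)) (by fun_prop)

lemma interaction_ne_top (hκ : IsRieszKernel κ) {H : Set E2} (hH : Bornology.IsBounded H) :
    interaction κ H ≠ ⊤ := by
  obtain ⟨R, hR⟩ := hH.subset_ball 0
  have hsub (x : E2) (hx : x ∈ ball 0 R) : ball (0 : E2) R ⊆ ball x (2 * R) := fun y hy => by
    rw [mem_ball] at hx hy ⊢
    linarith [dist_triangle_right y x 0]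
  have hle : interaction κ H ≤ ∫⁻ _ in ball (0 : E2) R, ∫⁻ z in ball (0 : E2) (2 * R), κ ‖z‖ :=
    calc interaction κ H ≤ ∫⁻ x in ball (0 : E2) R, ∫⁻ y in H, κ (dist x y) :=
          lintegral_mono_set hR
      _ ≤ _ := setLIntegral_mono' measurableSet_ball fun x hx => by
          rw [← hκ.lintegral_ball_dist x]
          exact lintegral_mono_set (hR.trans (hsub x hx))
  refine ne_top_of_le_ne_top ?_ hle
  rw [setLIntegral_const]
  exact ENNReal.mul_ne_top (hκ.lintegral_ball_lt_top _).ne measure_ball_lt_top.ne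

lemma interaction_eq_lintegral_prod (hκ : IsRieszKernel κ) (H : Set E2) :
    interaction κ H = ∫⁻ q in H ×ˢ H, κ (dist q.1 q.2) := by
  have hκm := hκ.measurable
  rw [Measure.volume_eq_prod, setLIntegral_prod _ (by fun_prop), interaction]

lemma add_exp (hκ : IsRieszKernel κ) (ε : ℝ≥0) :
    IsRieszKernel fun r => κ r + ε * ENNReal.ofReal (exp (-r)) where
  antitone r s hrs := by
    have := hκ.antitone hrs
    dsimp only
    gcongr
  lintegral_ball_lt_top ρ := by
    have hle : ∫⁻ z in ball (0 : E2) ρ, (ε * ENNReal.ofReal (exp (-‖z‖)) : ℝ≥0∞) ≤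
        ∫⁻ _ in ball (0 : E2) ρ, (ε : ℝ≥0∞) :=
      lintegral_mono fun z => mul_le_of_le_one_right' (by simp)
    rw [lintegral_add_right _ (by fun_prop)]
    refine ENNReal.add_lt_top.2 ⟨hκ.lintegral_ball_lt_top ρ, hle.trans_lt ?_⟩
    rw [setLIntegral_const]
    exact ENNReal.mul_lt_top ENNReal.coe_lt_top measure_ball_lt_top

lemma strictAntiOn_add_exp (hκ : IsRieszKernel κ) {ε : ℝ≥0} (hε : 0 < ε) :
    StrictAntiOn (fun r => κ r + ε * ENNReal.ofReal (exp (-r))) (Ioi 0) := by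
  intro r _ s hs hrs
  have hexp : (ε * ENNReal.ofReal (exp (-s)) : ℝ≥0∞) < ε * ENNReal.ofReal (exp (-r)) :=
    (ENNReal.mul_lt_mul_iff_right (by simpa using hε.ne') ENNReal.coe_ne_top).2
      ((ENNReal.ofReal_lt_ofReal_iff (exp_pos _)).2 (exp_lt_exp.2 (neg_lt_neg hrs)))
  exact ENNReal.add_lt_add_of_le_of_lt (hκ.ne_top hs) (hκ.antitone hrs.le) hexp

end IsRieszKernel

lemma interaction_mono {E : Type*} [MeasureSpace E] [Dist E] {κ κ' : ℝ → ℝ≥0∞} (h : κ ≤ κ')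
    (H : Set E) : interaction κ H ≤ interaction κ' H :=
  lintegral_mono fun _ => lintegral_mono fun _ => h _

lemma interaction_add_exp_le {E : Type*} [MeasureSpace E] [PseudoMetricSpace E] (κ : ℝ → ℝ≥0∞)
    (ε : ℝ≥0) (H : Set E) :
    interaction (fun r => κ r + ε * ENNReal.ofReal (exp (-r))) H ≤
      interaction κ H + ε * volume H * volume H := by
  have hexp (x y : E) : κ (dist x y) + ε * ENNReal.ofReal (exp (-dist x y)) ≤
      κ (dist x y) + ε := by
    gcongr
    exact mul_le_of_le_one_right' (by simp)
  refine (lintegral_mono fun x => lintegral_mono (hexp x)).trans_eq ?_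
  simp only [lintegral_add_right _ measurable_const, setLIntegral_const, interaction]

lemma measurable_planePoint : Measurable fun p : ℝ × ℝ => (!₂[p.1, p.2] : E2) := by
  refine (WithLp.measurable_toLp 2 (Fin 2 → ℝ)).comp (measurable_pi_lambda _ fun i => ?_)
  fin_cases i
  · exact measurable_fst
  · exact measurable_snd

lemma dist_planePoint (x y x' y' : ℝ) :
    dist (!₂[x, y] : E2) !₂[x', y'] = √((x - x') ^ 2 + (y - y') ^ 2) := by
  simp [EuclideanSpace.dist_eq, Real.dist_eq]

lemma lintegral_plane {f : E2 → ℝ≥0∞} (hf : Measurable f) :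
    ∫⁻ z, f z = ∫⁻ y : ℝ, ∫⁻ x : ℝ, f !₂[x, y] := by
  rw [← (PiLp.volume_preserving_toLp (Fin 2)).lintegral_comp hf,
    ← ((volume_preserving_finTwoArrow ℝ).symm _).lintegral_comp
      (f := fun v => f (WithLp.toLp 2 v)) (by fun_prop),
    Measure.volume_eq_prod, lintegral_prod_symm' _ (by fun_prop)]
  rfl

lemma measurable_planePoint_planePoint : Measurable fun t : ((ℝ × ℝ) × ℝ) × ℝ =>
    ((!₂[t.1.2, t.1.1.1], !₂[t.2, t.1.1.2]) : E2 × E2) :=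
  .prodMk
    (measurable_planePoint.comp
      (by fun_prop : Measurable fun t : ((ℝ × ℝ) × ℝ) × ℝ => (t.1.2, t.1.1.1)))
    (measurable_planePoint.comp
      (by fun_prop : Measurable fun t : ((ℝ × ℝ) × ℝ) × ℝ => (t.2, t.1.1.2)))

lemma lintegral_plane_plane {f : E2 × E2 → ℝ≥0∞} (hf : Measurable f) :
    ∫⁻ q, f q = ∫⁻ p : ℝ × ℝ, ∫⁻ x : ℝ, ∫⁻ x' : ℝ, f (!₂[x, p.1], !₂[x', p.2]) := by
  have hinner (z : E2) : Measurable fun z' => f (z, z') := hf.comp measurable_prodMk_left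
  have hpair : Measurable fun t : ((ℝ × ℝ) × ℝ) × ℝ => f (!₂[t.1.2, t.1.1.1], !₂[t.2, t.1.1.2]) :=
    hf.comp measurable_planePoint_planePoint
  have hswap (y : ℝ) : Measurable fun t : (ℝ × ℝ) × ℝ => f (!₂[t.1.1, y], !₂[t.2, t.1.2]) :=
    hpair.comp (by fun_prop : Measurable fun t : (ℝ × ℝ) × ℝ => (((y, t.1.2), t.1.1), t.2))
  calc ∫⁻ q, f q = ∫⁻ z, ∫⁻ z', f (z, z') := by
        rw [Measure.volume_eq_prod, lintegral_prod _ hf.aemeasurable]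
    _ = ∫⁻ y : ℝ, ∫⁻ x : ℝ, ∫⁻ y' : ℝ, ∫⁻ x' : ℝ, f (!₂[x, y], !₂[x', y']) := by
        rw [lintegral_plane hf.lintegral_prod_right']
        simp only [lintegral_plane (hinner _)]
    _ = ∫⁻ y : ℝ, ∫⁻ y' : ℝ, ∫⁻ x : ℝ, ∫⁻ x' : ℝ, f (!₂[x, y], !₂[x', y']) :=
        lintegral_congr fun y =>
          lintegral_lintegral_swap (hswap y).lintegral_prod_right'.aemeasurable
    _ = ∫⁻ p : ℝ × ℝ, ∫⁻ x : ℝ, ∫⁻ x' : ℝ, f (!₂[x, p.1], !₂[x', p.2]) := by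
        rw [Measure.volume_eq_prod,
          lintegral_prod _ hpair.lintegral_prod_right'.lintegral_prod_right'.aemeasurable]

/-- The horizontal slice of a planar set at height `y`. -/
def slice (H : Set E2) (y : ℝ) : Set ℝ := {x | !₂[x, y] ∈ H}

lemma measurableSet_slice {H : Set E2} (hH : MeasurableSet H) (y : ℝ) :
    MeasurableSet (slice H y) :=
  measurable_planePoint.comp measurable_prodMk_right hH

lemma volume_eq_lintegral_slice {H : Set E2} (hH : MeasurableSet H) :
    volume H = ∫⁻ y, volume (slice H y) := by
  rw [← lintegral_indicator_one hH, lintegral_plane (measurable_one.indicator hH)]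
  refine lintegral_congr fun y => ?_
  rw [← lintegral_indicator_one (measurableSet_slice hH y)]
  rfl

/-- The profile of `κ(|·|)` along a horizontal line at height `h`. -/
def sliceKernel (κ : ℝ → ℝ≥0∞) (h x : ℝ) : ℝ≥0∞ := κ √(x ^ 2 + h ^ 2)

/-- The interaction between the horizontal slices at heights `p.1` and `p.2`. -/
def sliceInteraction (κ : ℝ → ℝ≥0∞) (H : Set E2) (p : ℝ × ℝ) : ℝ≥0∞ :=
  ∫⁻ x in slice H p.1, ∫⁻ x' in slice H p.2, sliceKernel κ (p.1 - p.2) (x - x')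

lemma sliceInteraction_eq_lintegral_indicator {κ : ℝ → ℝ≥0∞} {H : Set E2} (hH : MeasurableSet H)
    (p : ℝ × ℝ) : sliceInteraction κ H p = ∫⁻ x, ∫⁻ x',
      (H ×ˢ H).indicator (fun q => κ (dist q.1 q.2)) (!₂[x, p.1], !₂[x', p.2]) := by
  rw [sliceInteraction, ← lintegral_indicator (measurableSet_slice hH p.1)]
  refine lintegral_congr fun x => ?_
  by_cases hx : !₂[x, p.1] ∈ H
  · rw [indicator_of_mem (show x ∈ slice H p.1 from hx),
      ← lintegral_indicator (measurableSet_slice hH p.2)]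
    refine lintegral_congr fun x' => ?_
    by_cases hx' : !₂[x', p.2] ∈ H
    · rw [indicator_of_mem (show x' ∈ slice H p.2 from hx'), indicator_of_mem (mk_mem_prod hx hx'),
        sliceKernel, dist_planePoint]
    · rw [indicator_of_notMem (show x' ∉ slice H p.2 from hx'),
        indicator_of_notMem fun hmem => hx' hmem.2]
  · simp [indicator, hx, slice, Set.mem_prod]

namespace IsRieszKernel

variable {κ : ℝ → ℝ≥0∞}

lemma evenStrictAnti_sliceKernel (hκ : IsRieszKernel κ) (hs : StrictAntiOn κ (Ioi 0)) {h : ℝ}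
    (hh : h ≠ 0) : EvenStrictAnti (sliceKernel κ h) where
  even x := by simp [sliceKernel]
  anti x hx y _ hxy := by
    rw [mem_Ici] at hx
    have hpos (t : ℝ) : 0 < √(t ^ 2 + h ^ 2) := by positivity
    exact hs (hpos x) (hpos y) (sqrt_lt_sqrt (by positivity) (by gcongr))
  zero_ne_top := hκ.ne_top (by positivity)

lemma measurable_indicator_prod (hκ : IsRieszKernel κ) {H : Set E2} (hH : MeasurableSet H) :
    Measurable ((H ×ˢ H).indicator fun q : E2 × E2 => κ (dist q.1 q.2)) := by
  have hκm := hκ.measurable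
  exact .indicator (by fun_prop) (hH.prod hH)

lemma interaction_eq_lintegral_sliceInteraction (hκ : IsRieszKernel κ) {H : Set E2}
    (hH : MeasurableSet H) : interaction κ H = ∫⁻ p, sliceInteraction κ H p := by
  rw [hκ.interaction_eq_lintegral_prod, ← lintegral_indicator (hH.prod hH),
    lintegral_plane_plane (hκ.measurable_indicator_prod hH)]
  simp only [sliceInteraction_eq_lintegral_indicator hH]

lemma measurable_sliceInteraction (hκ : IsRieszKernel κ) {H : Set E2} (hH : MeasurableSet H) :
    Measurable (sliceInteraction κ H) := by
  simp only [funext (sliceInteraction_eq_lintegral_indicator (κ := κ) hH)]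
  exact ((hκ.measurable_indicator_prod hH).comp
    measurable_planePoint_planePoint).lintegral_prod_right'.lintegral_prod_right'

end IsRieszKernel

/-- `IsSwept H h c w` says that `H` lies in the strip `|y| ≤ h` and that its horizontal slice at
height `y` in that range is the interval with center `c y` and half-length `w y` (empty when
`w y < 0`). -/
def IsSwept (H : Set E2) (h : ℝ) (c w : ℝ → ℝ) : Prop :=
  ∀ x y, !₂[x, y] ∈ H ↔ |y| ≤ h ∧ |x - c y| ≤ w y

namespace IsSwept

variable {H H₀ : Set E2} {h : ℝ} {c w : ℝ → ℝ} {κ : ℝ → ℝ≥0∞}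

lemma slice_eq_closedBall (hS : IsSwept H h c w) {y : ℝ} (hy : |y| ≤ h) :
    slice H y = closedBall (c y) (w y) := by
  ext x
  simp [slice, hS x y, hy, Real.dist_eq]

lemma slice_eq_empty (hS : IsSwept H h c w) {y : ℝ} (hy : ¬ |y| ≤ h) : slice H y = ∅ :=
  eq_empty_of_forall_notMem fun x hx => hy ((hS x y).1 hx).1

lemma volume_eq (hS : IsSwept H h c w) (hS₀ : IsSwept H₀ h 0 w) (hH : MeasurableSet H)
    (hH₀ : MeasurableSet H₀) : volume H = volume H₀ := by
  rw [volume_eq_lintegral_slice hH, volume_eq_lintegral_slice hH₀]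
  refine lintegral_congr fun y => ?_
  by_cases hy : |y| ≤ h
  · simp only [hS.slice_eq_closedBall hy, hS₀.slice_eq_closedBall hy, Real.volume_closedBall]
  · rw [hS.slice_eq_empty hy, hS₀.slice_eq_empty hy]

lemma sliceInteraction_le (hS : IsSwept H h c w) (hS₀ : IsSwept H₀ h 0 w) (hκ : IsRieszKernel κ)
    (hs : StrictAntiOn κ (Ioi 0)) {p : ℝ × ℝ} (hp : p.1 ≠ p.2) :
    sliceInteraction κ H p ≤ sliceInteraction κ H₀ p := by
  unfold sliceInteraction
  by_cases hp₁ : |p.1| ≤ h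
  · by_cases hp₂ : |p.2| ≤ h
    · rw [hS.slice_eq_closedBall hp₁, hS.slice_eq_closedBall hp₂, hS₀.slice_eq_closedBall hp₁,
        hS₀.slice_eq_closedBall hp₂]
      exact (hκ.evenStrictAnti_sliceKernel hs
        (sub_ne_zero.2 hp)).lintegral_closedBall_closedBall_le _ _ _ _
    · simp [hS.slice_eq_empty hp₂]
  · simp [hS.slice_eq_empty hp₁]

lemma sliceInteraction_lt (hS : IsSwept H h c w) (hS₀ : IsSwept H₀ h 0 w)
    (hκ : IsRieszKernel κ) (hs : StrictAntiOn κ (Ioi 0)) (hw : ∀ y, |y| < h → 0 < w y)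
    {p : ℝ × ℝ} (hp₁ : |p.1| < h) (hp₂ : |p.2| < h) (hc : c p.1 ≠ c p.2) :
    sliceInteraction κ H p < sliceInteraction κ H₀ p := by
  unfold sliceInteraction
  rw [hS.slice_eq_closedBall hp₁.le, hS.slice_eq_closedBall hp₂.le,
    hS₀.slice_eq_closedBall hp₁.le, hS₀.slice_eq_closedBall hp₂.le]
  exact (hκ.evenStrictAnti_sliceKernel hs (sub_ne_zero.2 (ne_of_apply_ne c hc))
    ).lintegral_closedBall_closedBall_lt (hw _ hp₁) (hw _ hp₂) hc

lemma interaction_lt (hS : IsSwept H h c w) (hS₀ : IsSwept H₀ h 0 w) (hH : IsCompact H)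
    (hH₀ : MeasurableSet H₀) (hκ : IsRieszKernel κ) (hs : StrictAntiOn κ (Ioi 0))
    (hw : ∀ y, |y| < h → 0 < w y) {y₁ y₂ : ℝ} (hy₁ : |y₁| < h) (hy₂ : |y₂| < h)
    (hc₁ : ContinuousAt c y₁) (hc₂ : ContinuousAt c y₂) (hc : c y₁ ≠ c y₂) :
    interaction κ H < interaction κ H₀ := by
  have hnear : {p : ℝ × ℝ | (|p.1| < h ∧ |p.2| < h) ∧ c p.1 ≠ c p.2} ∈ 𝓝 (y₁, y₂) := by
    have hc₁' : ContinuousAt (fun p : ℝ × ℝ => c p.1) (y₁, y₂) :=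
      ContinuousAt.comp (x := (y₁, y₂)) hc₁ continuousAt_fst
    have hc₂' : ContinuousAt (fun p : ℝ × ℝ => c p.2) (y₁, y₂) :=
      ContinuousAt.comp (x := (y₁, y₂)) hc₂ continuousAt_snd
    exact ((continuousAt_fst.abs.tendsto.eventually_lt_const hy₁).and
      (continuousAt_snd.abs.tendsto.eventually_lt_const hy₂)).and
      ((hc₁'.ne_iff_eventually_ne hc₂').1 hc)
  have hdiagonal : ∀ᵐ p : ℝ × ℝ, p.1 ≠ p.2 := by
    refine (Measure.ae_prod_iff_ae_ae
      (measurableSet_eq_fun measurable_fst measurable_snd).compl).2 (.of_forall fun y => ?_)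
    exact (volume.ae_ne y).mono fun _ => Ne.symm
  have hfin := hκ.interaction_ne_top hH.isBounded
  rw [hκ.interaction_eq_lintegral_sliceInteraction hH.measurableSet] at hfin ⊢
  rw [hκ.interaction_eq_lintegral_sliceInteraction hH₀]
  refine lintegral_strict_mono_of_ae_le_of_ae_lt_on
    (hκ.measurable_sliceInteraction hH₀).aemeasurable hfin ?_
    (Measure.measure_pos_of_mem_nhds volume hnear).ne'
    (.of_forall fun p hp => hS.sliceInteraction_lt hS₀ hκ hs hw hp.1.1 hp.1.2 hp.2)
  filter_upwards [hdiagonal] with p hp using hS.sliceInteraction_le hS₀ hκ hs hp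

end IsSwept

section SymHex

variable {E F : Type*} [AddCommGroup E] [Module ℝ E] [AddCommGroup F] [Module ℝ F]

/-- The convex hexagon with vertices `±A, ±B, ±C`, centered at the origin. -/
def symHex (A B C : E) : Set E := absConvexHull ℝ {A, B, C}

variable {A B C : E}

lemma absConvex_symHex : AbsConvex ℝ (symHex A B C) := absConvex_absConvexHull

lemma convex_symHex : Convex ℝ (symHex A B C) := absConvex_symHex.2

lemma symHex_subset_iff {S : Set E} (hS : AbsConvex ℝ S) :
    symHex A B C ⊆ S ↔ A ∈ S ∧ B ∈ S ∧ C ∈ S := by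
  rw [symHex, hS.absConvexHull_subset_iff, insert_subset_iff, insert_subset_iff,
    singleton_subset_iff]

lemma vertices_mem_symHex : A ∈ symHex A B C ∧ B ∈ symHex A B C ∧ C ∈ symHex A B C :=
  (symHex_subset_iff absConvex_symHex).1 subset_rfl

lemma neg_mem_symHex {z : E} : -z ∈ symHex A B C ↔ z ∈ symHex A B C :=
  absConvex_symHex.1.neg_mem_iff

lemma symHex_eq_convexHull (A B C : E) :
    symHex A B C = convexHull ℝ {A, B, C, -A, -B, -C} := by
  rw [symHex, ← convexHull_union_neg_eq_absConvexHull]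
  congr 1
  ext z
  simp only [mem_union, Set.mem_neg, mem_insert_iff, mem_singleton_iff, neg_eq_iff_eq_neg]
  tauto

lemma linearMap_image_symHex (f : E →ₗ[ℝ] F) (A B C : E) :
    f '' symHex A B C = symHex (f A) (f B) (f C) := by
  simp only [symHex_eq_convexHull, f.image_convexHull, image_insert_eq, image_singleton, map_neg]

lemma symHex_rotate (A B C : E) : symHex B C (-A) = symHex A B C := by
  obtain ⟨hA, hB, hC⟩ := vertices_mem_symHex (A := A) (B := B) (C := C)
  obtain ⟨hB', hC', hA'⟩ := vertices_mem_symHex (A := B) (B := C) (C := -A)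
  exact ((symHex_subset_iff absConvex_symHex).2 ⟨hB, hC, neg_mem_symHex.2 hA⟩).antisymm
    ((symHex_subset_iff absConvex_symHex).2 ⟨neg_mem_symHex.1 hA', hB', hC'⟩)

lemma symHex_swap_right (A B C : E) : symHex A C B = symHex A B C := by
  rw [symHex, symHex, pair_comm]

lemma symHex_neg_mid (A B C : E) : symHex A (-B) C = symHex A B C := by
  obtain ⟨hA, hB, hC⟩ := vertices_mem_symHex (A := A) (B := B) (C := C)
  obtain ⟨hA', hB', hC'⟩ := vertices_mem_symHex (A := A) (B := -B) (C := C)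
  exact ((symHex_subset_iff absConvex_symHex).2 ⟨hA, neg_mem_symHex.2 hB, hC⟩).antisymm
    ((symHex_subset_iff absConvex_symHex).2 ⟨hA', neg_mem_symHex.1 hB', hC'⟩)

lemma symHex_neg_right (A B C : E) : symHex A B (-C) = symHex A B C := by
  rw [symHex_swap_right, symHex_neg_mid, symHex_swap_right]

lemma smul_add_smul_add_smul_mem_symHex {s t u : ℝ} (hstu : |s| + |t| + |u| ≤ 1) :
    s • A + t • B + u • C ∈ symHex A B C := by
  have habs (r : ℝ) {P : E} (hP : P ∈ symHex A B C) :
      ∃ P' ∈ symHex A B C, |r| • P' = r • P := by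
    rcases abs_choice r with hr | hr <;> rw [hr]
    · exact ⟨P, hP, rfl⟩
    · exact ⟨-P, neg_mem_symHex.2 hP, neg_smul_neg r P⟩
  obtain ⟨hA, hB, hC⟩ := vertices_mem_symHex (A := A) (B := B) (C := C)
  obtain ⟨A', hA', hsA⟩ := habs s hA
  obtain ⟨B', hB', htB⟩ := habs t hB
  obtain ⟨C', hC', huC⟩ := habs u hC
  have hzero : (0 : E) ∈ symHex A B C := absConvex_symHex.1.zero_mem ⟨A, hA⟩
  have hcomb := convex_symHex.sum_mem (t := Finset.univ) (s := symHex A B C)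
    (w := ![|s|, |t|, |u|, 1 - (|s| + |t| + |u|)]) (z := ![A', B', C', 0])
    (by simp [Fin.forall_fin_succ, hstu]) (by simpa [Fin.sum_univ_succ] using by ring)
    (by simp [Fin.forall_fin_succ, hA', hB', hC', hzero])
  simpa [Fin.sum_univ_succ, hsA, htB, huC, add_assoc] using hcomb

lemma mem_symHex_iff {z : E} :
    z ∈ symHex A B C ↔ ∃ s t u : ℝ, |s| + |t| + |u| ≤ 1 ∧ s • A + t • B + u • C = z := by
  refine ⟨fun hz => ?_, ?_⟩
  · let S : Set E := {z | ∃ s t u : ℝ, |s| + |t| + |u| ≤ 1 ∧ s • A + t • B + u • C = z}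
    have hconv : Convex ℝ S := by
      rintro _ ⟨s, t, u, hstu, rfl⟩ _ ⟨s', t', u', hstu', rfl⟩ a b ha hb hab
      refine ⟨a * s + b * s', a * t + b * t', a * u + b * u', ?_, by module⟩
      have habs (r r' : ℝ) : |a * r + b * r'| ≤ a * |r| + b * |r'| :=
        (abs_add_le _ _).trans_eq (by rw [abs_mul, abs_mul, abs_of_nonneg ha, abs_of_nonneg hb])
      nlinarith [habs s s', habs t t', habs u u']
    have hneg : ∀ ⦃z⦄, z ∈ S → -z ∈ S := by
      rintro _ ⟨s, t, u, hstu, rfl⟩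
      exact ⟨-s, -t, -u, by simpa only [abs_neg] using hstu, by module⟩
    have hvert : A ∈ S ∧ B ∈ S ∧ C ∈ S :=
      ⟨⟨1, 0, 0, by simp, by simp⟩, ⟨0, 1, 0, by simp, by simp⟩, ⟨0, 0, 1, by simp, by simp⟩⟩
    exact (symHex_subset_iff ⟨(balanced_iff_neg_mem hconv).2 hneg, hconv⟩).2 hvert hz
  · rintro ⟨s, t, u, hstu, rfl⟩
    exact smul_add_smul_add_smul_mem_symHex hstu

end SymHex

section NormedSpace

variable {E : Type*} [NormedAddCommGroup E] [NormedSpace ℝ E] {A B C : E}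

lemma isCompact_symHex : IsCompact (symHex A B C) := by
  rw [symHex_eq_convexHull]
  exact (toFinite _).isCompact_convexHull ℝ

lemma symHex_subset_closedBall_iff {R : ℝ} :
    symHex A B C ⊆ closedBall 0 R ↔ ‖(A, B, C)‖ ≤ R := by
  have hball : AbsConvex ℝ (closedBall (0 : E) R) :=
    ⟨balanced_closedBall_zero, convex_closedBall 0 R⟩
  rw [symHex_subset_iff hball, norm_prod_le_iff, norm_prod_le_iff]
  simp

lemma diam_symHex (A B C : E) : diam (symHex A B C) = 2 * ‖(A, B, C)‖ := by
  refine le_antisymm ((diam_mono (symHex_subset_closedBall_iff.2 le_rfl)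
    isBounded_closedBall).trans (diam_closedBall (norm_nonneg _))) ?_
  have hle {P : E} (hP : P ∈ symHex A B C) : ‖P‖ ≤ diam (symHex A B C) / 2 := by
    have hdist := dist_le_diam_of_mem isCompact_symHex.isBounded hP (neg_mem_symHex.2 hP)
    rw [dist_eq_norm, sub_neg_eq_add, ← two_smul ℝ P, norm_smul, Real.norm_two] at hdist
    linarith
  obtain ⟨hA, hB, hC⟩ := vertices_mem_symHex (A := A) (B := B) (C := C)
  have hnorm : ‖(A, B, C)‖ ≤ diam (symHex A B C) / 2 :=
    norm_prod_le_iff.2 ⟨hle hA, norm_prod_le_iff.2 ⟨hle hB, hle hC⟩⟩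
  linarith

end NormedSpace

section Continuity

lemma continuousAt_setLIntegral {X α : Type*} [TopologicalSpace X] [FirstCountableTopology X]
    [MeasurableSpace α] {μ : Measure α} {f : α → ℝ≥0∞} (hf : AEMeasurable f μ) {S : X → Set α}
    (hS : ∀ x, MeasurableSet (S x)) {B : Set α} (hB : MeasurableSet B) (hfB : ∫⁻ a in B, f a ∂μ ≠ ⊤)
    {x : X} (hSB : ∀ᶠ y in 𝓝 x, S y ⊆ B)
    (hstable : ∀ᵐ a ∂μ, ∀ᶠ y in 𝓝 x, a ∈ S y ↔ a ∈ S x) :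
    ContinuousAt (fun y => ∫⁻ a in S y, f a ∂μ) x := by
  simp only [ContinuousAt, ← lintegral_indicator (hS _)]
  refine tendsto_lintegral_filter_of_dominated_convergence' (B.indicator f)
    (.of_forall fun y => hf.indicator (hS y)) ?_ (by rwa [lintegral_indicator hB]) ?_
  · filter_upwards [hSB] with y hy
    exact .of_forall (indicator_le_indicator_of_subset hy fun _ => zero_le)
  · filter_upwards [hstable] with a ha
    refine tendsto_nhds_of_eventually_eq (ha.mono fun y hy => ?_)
    by_cases hax : a ∈ S x
    · rw [indicator_of_mem hax, indicator_of_mem (hy.2 hax)]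
    · rw [indicator_of_notMem hax, indicator_of_notMem (mt hy.1 hax)]

section NormedSpace

variable {E : Type*} [NormedAddCommGroup E] [NormedSpace ℝ E]

lemma exists_mem_ball_add_lt_apply {f : E →L[ℝ] ℝ} {z : E} {ε c : ℝ} (hε : 0 < ε)
    (hc : c < ‖f‖ * ε) : ∃ y ∈ ball z ε, f z + c < f y := by
  obtain ⟨x, hx, hfx⟩ := f.exists_lt_apply_of_lt_opNorm ((div_lt_iff₀ hε).2 hc)
  obtain ⟨x', hx', hfx'⟩ : ∃ x', ‖x'‖ < 1 ∧ f x' = ‖f x‖ := by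
    rcases abs_choice (f x) with habs | habs
    · exact ⟨x, hx, habs.symm⟩
    · exact ⟨-x, by rwa [norm_neg], by rw [map_neg, Real.norm_eq_abs, habs]⟩
  refine ⟨z + ε • x', ?_, ?_⟩
  · rw [mem_ball, dist_eq_norm, add_sub_cancel_left, norm_smul, Real.norm_of_nonneg hε.le]
    exact mul_lt_of_lt_one_right hε hx'
  · rw [map_add, map_smul, hfx', smul_eq_mul, add_lt_add_iff_left, mul_comm]
    exact (div_lt_iff₀ hε).1 hfx

-- A functional separating `z` from `S` exceeds its supremum over the thickening somewhere in the
-- ball.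
lemma mem_of_ball_subset_thickening {S : Set E} (hS : Convex ℝ S) (hcl : IsClosed S) {z : E}
    {ε δ : ℝ} (hδε : δ < ε) (hε : 0 < ε) (h : ball z ε ⊆ thickening δ S) : z ∈ S := by
  by_contra hz
  obtain ⟨f, u, hfS, hfz⟩ := geometric_hahn_banach_closed_point hS hcl hz
  have hf : 0 < ‖f‖ := by
    obtain ⟨b, hb, -⟩ := mem_thickening_iff.1 (h (mem_ball_self hε))
    refine norm_pos_iff.2 fun hf => ((hfS b hb).trans hfz).ne ?_
    simp only [hf, zero_apply]
  obtain ⟨y, hy, hfy⟩ := exists_mem_ball_add_lt_apply (z := z) hε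
    (mul_lt_mul_of_pos_left hδε hf)
  obtain ⟨b, hb, hyb⟩ := mem_thickening_iff.1 (h hy)
  have hdiff : f y - f b ≤ ‖f‖ * δ :=
    calc f y - f b = f (y - b) := (map_sub f y b).symm
      _ ≤ ‖f‖ * ‖y - b‖ := (le_abs_self _).trans (f.le_opNorm _)
      _ ≤ ‖f‖ * δ := by
        rw [← dist_eq_norm]
        gcongr
  linarith [hfS b hb]

lemma eventually_symHex_subset_thickening {v : E × E × E} {ε : ℝ} (hε : 0 < ε) :
    ∀ᶠ w : E × E × E in 𝓝 v,
      symHex w.1 w.2.1 w.2.2 ⊆ thickening ε (symHex v.1 v.2.1 v.2.2) ∧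
        symHex v.1 v.2.1 v.2.2 ⊆ thickening ε (symHex w.1 w.2.1 w.2.2) := by
  have hsub {v w : E × E × E} (hvw : dist v w < ε) :
      symHex v.1 v.2.1 v.2.2 ⊆ thickening ε (symHex w.1 w.2.1 w.2.2) := by
    obtain ⟨hA, hB, hC⟩ := vertices_mem_symHex (A := w.1) (B := w.2.1) (C := w.2.2)
    have habs : AbsConvex ℝ (thickening ε (symHex w.1 w.2.1 w.2.2)) := by
      have hconv := (convex_symHex (A := w.1) (B := w.2.1) (C := w.2.2)).thickening ε
      refine ⟨(balanced_iff_neg_mem hconv).2 fun z hz => ?_, hconv⟩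
      obtain ⟨b, hb, hzb⟩ := mem_thickening_iff.1 hz
      exact mem_thickening_iff.2 ⟨-b, neg_mem_symHex.2 hb, by rwa [dist_neg_neg]⟩
    simp only [Prod.dist_eq, max_lt_iff] at hvw
    exact (symHex_subset_iff habs).2 ⟨mem_thickening_iff.2 ⟨_, hA, hvw.1⟩,
      mem_thickening_iff.2 ⟨_, hB, hvw.2.1⟩, mem_thickening_iff.2 ⟨_, hC, hvw.2.2⟩⟩
  filter_upwards [ball_mem_nhds v hε] with w hw
  exact ⟨hsub hw, hsub (dist_comm w v ▸ hw)⟩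

lemma eventually_mem_symHex_iff {v : E × E × E} {z : E}
    (hz : z ∉ frontier (symHex v.1 v.2.1 v.2.2)) :
    ∀ᶠ w : E × E × E in 𝓝 v, z ∈ symHex w.1 w.2.1 w.2.2 ↔ z ∈ symHex v.1 v.2.1 v.2.2 := by
  by_cases hmem : z ∈ symHex v.1 v.2.1 v.2.2
  · have hint : z ∈ interior (symHex v.1 v.2.1 v.2.2) := by
      by_contra hcon
      exact hz ⟨subset_closure hmem, hcon⟩
    obtain ⟨ε, hε, hball⟩ := Metric.mem_nhds_iff.1 (mem_interior_iff_mem_nhds.1 hint)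
    filter_upwards [eventually_symHex_subset_thickening (half_pos hε)] with w hw
    exact iff_of_true (mem_of_ball_subset_thickening convex_symHex isCompact_symHex.isClosed
      (half_lt_self hε) hε (hball.trans hw.2)) hmem
  · have hε := (isCompact_symHex.isClosed.notMem_iff_infDist_pos
      ⟨_, vertices_mem_symHex.1⟩).1 hmem
    filter_upwards [eventually_symHex_subset_thickening hε] with w hw
    refine iff_of_false (fun hzw => ?_) hmem
    obtain ⟨b, hb, hlt⟩ := mem_thickening_iff.1 (hw.1 hzw)
    exact (infDist_le_dist_of_mem hb).not_gt hlt

lemma eventually_symHex_subset_closedBall (v : E × E × E) :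
    ∀ᶠ w : E × E × E in 𝓝 v, symHex w.1 w.2.1 w.2.2 ⊆ closedBall 0 (‖v‖ + 1) := by
  have hlt : ∀ᶠ w : E × E × E in 𝓝 v, ‖w‖ < ‖v‖ + 1 :=
    continuous_norm.continuousAt.eventually_lt_const (lt_add_one _)
  exact hlt.mono fun w hw => symHex_subset_closedBall_iff.2 hw.le

variable [MeasurableSpace E] [BorelSpace E]

lemma measurableSet_symHex {A B C : E} : MeasurableSet (symHex A B C) :=
  isCompact_symHex.measurableSet

variable [FiniteDimensional ℝ E]

lemma ae_eventually_mem_symHex_iff (μ : Measure E) [μ.IsAddHaarMeasure] (v : E × E × E) :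
    ∀ᵐ z ∂μ, ∀ᶠ w : E × E × E in 𝓝 v,
      z ∈ symHex w.1 w.2.1 w.2.2 ↔ z ∈ symHex v.1 v.2.1 v.2.2 :=
  (measure_eq_zero_iff_ae_notMem.1 (convex_symHex.addHaar_frontier μ)).mono fun _ =>
    eventually_mem_symHex_iff

lemma continuous_measure_symHex (μ : Measure E) [μ.IsAddHaarMeasure] :
    Continuous fun v : E × E × E => μ (symHex v.1 v.2.1 v.2.2) := by
  refine continuous_iff_continuousAt.2 fun v => ?_
  simp only [← setLIntegral_one]
  exact continuousAt_setLIntegral aemeasurable_const (fun _ => measurableSet_symHex)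
    measurableSet_closedBall (by simpa using measure_closedBall_lt_top.ne)
    (eventually_symHex_subset_closedBall v) (ae_eventually_mem_symHex_iff μ v)

end NormedSpace

lemma IsRieszKernel.continuous_interaction_symHex {κ : ℝ → ℝ≥0∞} (hκ : IsRieszKernel κ) :
    Continuous fun v : E2 × E2 × E2 => interaction κ (symHex v.1 v.2.1 v.2.2) := by
  refine continuous_iff_continuousAt.2 fun v => ?_
  have hκm := hκ.measurable
  have hfinite := hκ.interaction_ne_top (isBounded_closedBall (x := 0) (r := ‖v‖ + 1))
  have hstable := ae_eventually_mem_symHex_iff (volume : Measure E2) v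
  simp only [hκ.interaction_eq_lintegral_prod] at hfinite ⊢
  refine continuousAt_setLIntegral (by fun_prop)
    (fun w => measurableSet_symHex.prod measurableSet_symHex)
    (measurableSet_closedBall.prod measurableSet_closedBall) hfinite
    ((eventually_symHex_subset_closedBall v).mono fun w hw => prod_mono hw hw) ?_
  filter_upwards [Measure.quasiMeasurePreserving_fst.ae hstable,
    Measure.quasiMeasurePreserving_snd.ae hstable] with q hq₁ hq₂
  filter_upwards [hq₁, hq₂] with w hw₁ hw₂
  simp only [mem_prod, hw₁, hw₂]

end Continuity

/-- The hexagon with vertices `±(m + l, h₁)`, `±(b, h₂)`, `±(m - l, h₁)`, whose diagonal joining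
`(m + l, h₁)` to `(m - l, h₁)` is horizontal. -/
def levelHex (m b l h₁ h₂ : ℝ) : Set E2 := symHex !₂[m + l, h₁] !₂[b, h₂] !₂[m - l, h₁]

/-- The shape constraints making `levelHex m b l h₁ h₂` a convex hexagon with these six points in
cyclic order on its boundary. -/
structure IsLevelHex (m b l h₁ h₂ : ℝ) : Prop where
  length_pos : 0 < l
  height_pos : 0 < h₁
  height_le : h₁ ≤ h₂
  abs_le : |h₁ * b - m * h₂| ≤ h₁ * l

/-- The center of the chord of `levelHex m b l h₁ h₂` at height `y`: the odd function which is
linear on `[0, h₁]` and on `[h₁, h₂]`, with value `m` at `h₁` and `b` at `h₂`. -/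
def chordCenter (m b h₁ h₂ y : ℝ) : ℝ :=
  m * (max (-h₁) (min y h₁) / h₁) + (b - m) * ((y - max (-h₁) (min y h₁)) / (h₂ - h₁))

/-- Half of the length of the chord of `levelHex m b l h₁ h₂` at height `y`. -/
def chordHalfLength (l h₁ h₂ y : ℝ) : ℝ := l * (1 - max (|y| - h₁) 0 / (h₂ - h₁))

lemma mem_levelHex_iff {m b l h₁ h₂ x y : ℝ} : !₂[x, y] ∈ levelHex m b l h₁ h₂ ↔
    ∃ p q t : ℝ, |p| + |t| ≤ 1 ∧ |q| + |t| ≤ 1 ∧ p * m + q * l + t * b = x ∧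
      p * h₁ + t * h₂ = y := by
  have hcoord (s t u : ℝ) : s • (!₂[m + l, h₁] : E2) + t • !₂[b, h₂] + u • !₂[m - l, h₁] =
      !₂[(s + u) * m + (s - u) * l + t * b, (s + u) * h₁ + t * h₂] := by
    ext i
    fin_cases i <;> simp <;> ring
  rw [levelHex, mem_symHex_iff]
  constructor
  · rintro ⟨s, t, u, hstu, hz⟩
    rw [hcoord] at hz
    refine ⟨s + u, s - u, t, ?_, ?_, congrArg (· 0) hz, congrArg (· 1) hz⟩
    · linarith [abs_add_le s u]
    · linarith [abs_sub s u]
  · rintro ⟨p, q, t, hpt, hqt, rfl, rfl⟩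
    refine ⟨(p + q) / 2, t, (p - q) / 2, ?_, ?_⟩
    · have hmax : |(p + q) / 2| + |(p - q) / 2| ≤ max |p| |q| := by
        rcases abs_cases ((p + q) / 2) with ⟨h, -⟩ | ⟨h, -⟩ <;>
          rcases abs_cases ((p - q) / 2) with ⟨h', -⟩ | ⟨h', -⟩ <;> rw [h, h', le_max_iff]
        · exact .inl (by linarith [le_abs_self p])
        · exact .inr (by linarith [le_abs_self q])
        · exact .inr (by linarith [neg_le_abs q])
        · exact .inl (by linarith [neg_le_abs p])
      rcases max_cases |p| |q| with ⟨h, -⟩ | ⟨h, -⟩ <;> linarith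
    · rw [hcoord]
      ring_nf

lemma neg_mem_levelHex_iff {m b l h₁ h₂ x y : ℝ} :
    !₂[-x, -y] ∈ levelHex m b l h₁ h₂ ↔ !₂[x, y] ∈ levelHex m b l h₁ h₂ := by
  have hneg : (!₂[-x, -y] : E2) = -!₂[x, y] := by
    ext i
    fin_cases i <;> simp
  rw [hneg, levelHex, neg_mem_symHex]

lemma isCompact_levelHex {m b l h₁ h₂ : ℝ} : IsCompact (levelHex m b l h₁ h₂) := isCompact_symHex

section Chord

variable {m b l h₁ h₂ y : ℝ}

lemma continuous_chordCenter : Continuous (chordCenter m b h₁ h₂) := by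
  unfold chordCenter
  fun_prop

lemma chordCenter_of_abs_le (hy : |y| ≤ h₁) : chordCenter m b h₁ h₂ y = m * (y / h₁) := by
  rw [abs_le] at hy
  rw [chordCenter, min_eq_left hy.2, max_eq_right hy.1]
  simp

lemma chordCenter_of_le (hh₁ : 0 < h₁) (hy : h₁ ≤ y) :
    chordCenter m b h₁ h₂ y = m + (b - m) * ((y - h₁) / (h₂ - h₁)) := by
  rw [chordCenter, min_eq_right hy, max_eq_right (by linarith), div_self hh₁.ne', mul_one]

lemma chordCenter_neg (hh₁ : 0 < h₁) :
    chordCenter m b h₁ h₂ (-y) = -chordCenter m b h₁ h₂ y := by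
  have hclamp : max (-h₁) (min (-y) h₁) = -max (-h₁) (min y h₁) := by
    rw [max_min_distrib_left (-h₁) y h₁, max_eq_right (a := -h₁) (b := h₁) (by linarith),
      ← max_neg_neg, ← min_neg_neg, neg_neg, max_comm, min_comm h₁]
  rw [chordCenter, chordCenter, hclamp]
  ring

lemma chordHalfLength_of_abs_le (hy : |y| ≤ h₁) : chordHalfLength l h₁ h₂ y = l := by
  rw [chordHalfLength, max_eq_right (by linarith), zero_div, sub_zero, mul_one]

lemma chordHalfLength_of_le (hh₁ : 0 < h₁) (hy : h₁ ≤ y) :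
    chordHalfLength l h₁ h₂ y = l * (1 - (y - h₁) / (h₂ - h₁)) := by
  rw [chordHalfLength, abs_of_nonneg (by linarith), max_eq_left (by linarith)]

lemma chordHalfLength_neg : chordHalfLength l h₁ h₂ (-y) = chordHalfLength l h₁ h₂ y := by
  rw [chordHalfLength, chordHalfLength, abs_neg]

end Chord

namespace IsLevelHex

variable {m b l h₁ h₂ : ℝ}

lemma abs_mul_add_mul_le (hL : IsLevelHex m b l h₁ h₂) (q t : ℝ) :
    |q * l + t * (b - m * h₂ / h₁)| ≤ (|q| + |t|) * l := by
  have hl := hL.length_pos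
  have hh₁ := hL.height_pos
  have hcenter : h₁ * |b - m * h₂ / h₁| ≤ h₁ * l :=
    calc h₁ * |b - m * h₂ / h₁| = |h₁ * (b - m * h₂ / h₁)| := by rw [abs_mul, abs_of_pos hh₁]
      _ = |h₁ * b - m * h₂| := by field_simp
      _ ≤ h₁ * l := hL.abs_le
  calc _ ≤ |q| * l + |t| * |b - m * h₂ / h₁| := by
        simpa only [abs_mul, abs_of_pos hl] using abs_add_le (q * l) (t * (b - m * h₂ / h₁))
    _ ≤ |q| * l + |t| * l := by
        gcongr
        exact le_of_mul_le_mul_left hcenter hh₁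
    _ = (|q| + |t|) * l := (add_mul ..).symm

lemma abs_le_of_mem (hL : IsLevelHex m b l h₁ h₂) {x y : ℝ}
    (hxy : !₂[x, y] ∈ levelHex m b l h₁ h₂) : |y| ≤ h₂ := by
  have hh₁ := hL.height_pos
  have hh₂ := hL.height_le
  obtain ⟨p, q, t, hpt, -, -, rfl⟩ := mem_levelHex_iff.1 hxy
  calc |p * h₁ + t * h₂| ≤ |p| * h₁ + |t| * h₂ := by
        simpa only [abs_mul, abs_of_pos hh₁, abs_of_pos (hh₁.trans_le hh₂)] using
          abs_add_le (p * h₁) (t * h₂)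
    _ ≤ (|p| + |t|) * h₂ := by nlinarith [abs_nonneg p]
    _ ≤ h₂ := mul_le_of_le_one_left (hh₁.le.trans hh₂) hpt

lemma mem_iff_of_le (hL : IsLevelHex m b l h₁ h₂) {x y : ℝ} (hy : |y| ≤ h₁) :
    !₂[x, y] ∈ levelHex m b l h₁ h₂ ↔ |x - m * (y / h₁)| ≤ l := by
  have hl := hL.length_pos
  have hh₁ := hL.height_pos
  rw [mem_levelHex_iff]
  constructor
  · rintro ⟨p, q, t, -, hqt, rfl, rfl⟩
    calc _ = |q * l + t * (b - m * h₂ / h₁)| := by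
          congr 1
          field_simp
          ring
      _ ≤ (|q| + |t|) * l := hL.abs_mul_add_mul_le q t
      _ ≤ l := mul_le_of_le_one_left hl.le hqt
  · refine fun hx => ⟨y / h₁, (x - m * (y / h₁)) / l, 0, ?_, ?_, ?_, ?_⟩
    · rwa [abs_zero, add_zero, abs_div, abs_of_pos hh₁, div_le_one hh₁]
    · rwa [abs_zero, add_zero, abs_div, abs_of_pos hl, div_le_one hl]
    · field_simp
      ring
    · field_simp
      ring

lemma mem_iff_of_lt (hL : IsLevelHex m b l h₁ h₂) (hh : h₁ < h₂) {x τ : ℝ} (hτ : 0 ≤ τ)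
    (hτ' : τ ≤ 1) :
    !₂[x, h₁ + τ * (h₂ - h₁)] ∈ levelHex m b l h₁ h₂ ↔
      |x - (m + (b - m) * τ)| ≤ l * (1 - τ) := by
  have hl := hL.length_pos
  have hh₁ := hL.height_pos
  rw [mem_levelHex_iff]
  constructor
  · rintro ⟨p, q, t, hpt, hqt, rfl, hpy⟩
    have hp : p = 1 - τ + (τ - t) * h₂ / h₁ := by
      field_simp
      linarith
    have hsub : |t - τ| = t - τ := by
      have hpt' : (τ - t) * (h₂ - h₁) ≤ 0 := by nlinarith [le_abs_self p, le_abs_self t]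
      exact abs_of_nonneg (by nlinarith)
    calc _ = |q * l + (t - τ) * (b - m * h₂ / h₁)| := by
          rw [hp]
          congr 1
          field_simp
          ring
      _ ≤ (|q| + |t - τ|) * l := hL.abs_mul_add_mul_le q (t - τ)
      _ ≤ l * (1 - τ) := by nlinarith [le_abs_self t]
  · refine fun hx => ⟨1 - τ, (x - (m + (b - m) * τ)) / l, τ, ?_, ?_, ?_, ?_⟩
    · rw [abs_of_nonneg hτ, abs_of_nonneg (by linarith)]
      linarith
    · rw [abs_of_nonneg hτ, abs_div, abs_of_pos hl, ← le_sub_iff_add_le, div_le_iff₀' hl]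
      exact hx
    · field_simp
      ring
    · ring

lemma isSwept (hL : IsLevelHex m b l h₁ h₂) :
    IsSwept (levelHex m b l h₁ h₂) h₂ (chordCenter m b h₁ h₂) (chordHalfLength l h₁ h₂) := by
  have hh₁ := hL.height_pos
  intro x y
  wlog hy : 0 ≤ y generalizing x y
  · rw [← neg_mem_levelHex_iff, this (-x) (-y) (by linarith), abs_neg, chordCenter_neg hh₁,
      chordHalfLength_neg, ← neg_sub', abs_neg]
  rcases le_or_gt y h₁ with hyh | hyh
  · have hyh' : |y| ≤ h₁ := by rwa [abs_of_nonneg hy]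
    rw [hL.mem_iff_of_le hyh', chordCenter_of_abs_le hyh', chordHalfLength_of_abs_le hyh',
      and_iff_right (hyh'.trans hL.height_le)]
  rcases le_or_gt y h₂ with hyh₂ | hyh₂
  · have hh : h₁ < h₂ := hyh.trans_le hyh₂
    have hτ : (y - h₁) / (h₂ - h₁) ≤ 1 := (div_le_one (sub_pos.2 hh)).2 (by linarith)
    have hmem := hL.mem_iff_of_lt hh (x := x)
      (div_nonneg (sub_nonneg.2 hyh.le) (sub_nonneg.2 hh.le)) hτ
    rw [div_mul_cancel₀ _ (sub_pos.2 hh).ne', add_sub_cancel] at hmem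
    rw [hmem, chordCenter_of_le hh₁ hyh.le, chordHalfLength_of_le hh₁ hyh.le,
      and_iff_right (by rwa [abs_of_nonneg hy])]
  · have hy' : ¬ |y| ≤ h₂ := by rwa [abs_of_nonneg hy, not_le]
    exact iff_of_false (mt hL.abs_le_of_mem hy') fun h => hy' h.1

lemma symm_center (hL : IsLevelHex m b l h₁ h₂) : IsLevelHex 0 0 l h₁ h₂ where
  length_pos := hL.length_pos
  height_pos := hL.height_pos
  height_le := hL.height_le
  abs_le := by
    have := hL.length_pos
    have := hL.height_pos
    rw [mul_zero, zero_mul, sub_zero, abs_zero]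
    positivity

lemma isSwept_zero (hL : IsLevelHex m b l h₁ h₂) :
    IsSwept (levelHex 0 0 l h₁ h₂) h₂ 0 (chordHalfLength l h₁ h₂) := by
  convert hL.symm_center.isSwept using 1
  funext y
  simp [chordCenter]

lemma chordHalfLength_pos (hL : IsLevelHex m b l h₁ h₂) {y : ℝ} (hy : |y| < h₂) :
    0 < chordHalfLength l h₁ h₂ y := by
  refine mul_pos hL.length_pos (sub_pos.2 ?_)
  rcases hL.height_le.eq_or_lt with hh | hh
  · rw [hh, sub_self, div_zero]
    exact one_pos
  · rw [div_lt_one (sub_pos.2 hh)]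
    exact max_lt (by linarith) (by linarith)

lemma exists_chordCenter_ne_zero (hL : IsLevelHex m b l h₁ h₂) (h : m ≠ 0 ∨ h₁ < h₂ ∧ b ≠ 0) :
    ∃ y, |y| < h₂ ∧ chordCenter m b h₁ h₂ y ≠ 0 := by
  have hh₁ := hL.height_pos
  have hh₂ := hL.height_le
  rcases eq_or_ne m 0 with rfl | hm
  · obtain ⟨hh, hb⟩ := h.resolve_left (not_not.2 rfl)
    refine ⟨(h₁ + h₂) / 2, ?_, ?_⟩
    · rw [abs_of_pos (by linarith)]
      linarith
    · rw [chordCenter_of_le hh₁ (by linarith), zero_add, sub_zero]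
      exact mul_ne_zero hb (div_ne_zero (by linarith) (by linarith))
  · have hhalf : |h₁ / 2| = h₁ / 2 := abs_of_pos (by linarith)
    refine ⟨h₁ / 2, by linarith, ?_⟩
    rw [chordCenter_of_abs_le (by linarith)]
    exact mul_ne_zero hm (div_ne_zero (by linarith) hh₁.ne')

lemma volume_eq (hL : IsLevelHex m b l h₁ h₂) :
    volume (levelHex m b l h₁ h₂) = volume (levelHex 0 0 l h₁ h₂) :=
  hL.isSwept.volume_eq hL.isSwept_zero isCompact_levelHex.measurableSet
    isCompact_levelHex.measurableSet

lemma interaction_lt (hL : IsLevelHex m b l h₁ h₂) (h : m ≠ 0 ∨ h₁ < h₂ ∧ b ≠ 0)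
    {κ : ℝ → ℝ≥0∞} (hκ : IsRieszKernel κ) (hs : StrictAntiOn κ (Ioi 0)) :
    interaction κ (levelHex m b l h₁ h₂) < interaction κ (levelHex 0 0 l h₁ h₂) := by
  have hzero : chordCenter m b h₁ h₂ 0 = 0 := by
    rw [chordCenter_of_abs_le (by simpa using hL.height_pos.le), zero_div, mul_zero]
  obtain ⟨y, hy, hcy⟩ := hL.exists_chordCenter_ne_zero h
  exact hL.isSwept.interaction_lt hL.isSwept_zero isCompact_levelHex
    isCompact_levelHex.measurableSet hκ hs (fun _ => hL.chordHalfLength_pos) hy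
    (by simpa using hL.height_pos.trans_le hL.height_le) continuous_chordCenter.continuousAt
    continuous_chordCenter.continuousAt (hzero.symm ▸ hcy)

end IsLevelHex

lemma inner_plane (u v : E2) : ⟪u, v⟫ = u 0 * v 0 + u 1 * v 1 := by
  rw [PiLp.inner_apply, Fin.sum_univ_two]
  simp [mul_comm]

lemma norm_sq_plane (u : E2) : ‖u‖ ^ 2 = u 0 ^ 2 + u 1 ^ 2 := by
  rw [EuclideanSpace.real_norm_sq_eq, Fin.sum_univ_two]

lemma det2_swap (u v : E2) : det2 v u = -det2 u v := by
  rw [det2, det2]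
  ring

lemma det2_neg_right (u v : E2) : det2 u (-v) = -det2 u v := by
  rw [det2, det2, PiLp.neg_apply, PiLp.neg_apply]
  ring

lemma det2_smul_eq_add (A B C : E2) : det2 A C • B = det2 B C • A + det2 A B • C := by
  ext i
  fin_cases i <;> simp [det2] <;> ring

lemma det2_sq_add_inner_sq (u v : E2) : det2 u v ^ 2 + ⟪u, v⟫ ^ 2 = ‖u‖ ^ 2 * ‖v‖ ^ 2 := by
  rw [det2, inner_plane, norm_sq_plane, norm_sq_plane]
  ring

lemma det2_neg_swap (u v : E2) : det2 v (-u) = det2 u v := by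
  rw [det2_neg_right, det2_swap, neg_neg]

/-- Multiplication by `w` when the plane is identified with `ℂ`: the composition of a rotation and
a dilation by `‖w‖`. -/
def complexMul (w : E2) : E2 →ₗ[ℝ] E2 where
  toFun z := !₂[w 0 * z 0 - w 1 * z 1, w 0 * z 1 + w 1 * z 0]
  map_add' x y := by
    ext i
    fin_cases i <;> simp <;> ring
  map_smul' c x := by
    ext i
    fin_cases i <;> simp <;> ring

lemma complexMul_apply (w z : E2) :
    complexMul w z = !₂[w 0 * z 0 - w 1 * z 1, w 0 * z 1 + w 1 * z 0] := rfl

lemma norm_complexMul (w z : E2) : ‖complexMul w z‖ = ‖w‖ * ‖z‖ := by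
  rw [← sq_eq_sq₀ (norm_nonneg _) (by positivity), mul_pow, norm_sq_plane, norm_sq_plane w,
    norm_sq_plane z, complexMul_apply]
  simp only [Matrix.cons_val_zero, Matrix.cons_val_one]
  ring

lemma det2_complexMul (w u v : E2) :
    det2 (complexMul w u) (complexMul w v) = ‖w‖ ^ 2 * det2 u v := by
  rw [norm_sq_plane, complexMul_apply, complexMul_apply, det2, det2]
  simp only [Matrix.cons_val_zero, Matrix.cons_val_one]
  ring

lemma complexMul_inner_det2 (u v : E2) : complexMul u !₂[⟪u, v⟫, det2 u v] = ‖u‖ ^ 2 • v := by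
  rw [inner_plane, norm_sq_plane, det2, complexMul_apply]
  ext i
  fin_cases i <;> simp <;> ring

lemma exists_rotation {u : E2} (hu : u ≠ 0) : ∃ T : E2 ≃ₗᵢ[ℝ] E2, T u = !₂[‖u‖, 0] ∧
    ∀ v w, det2 (T v) (T w) = det2 v w := by
  have hu' : ‖u‖ ≠ 0 := norm_ne_zero_iff.2 hu
  set w : E2 := ‖u‖⁻¹ • !₂[u 0, -u 1] with hw
  have hw_norm : ‖w‖ = 1 := by
    have hconj : ‖(!₂[u 0, -u 1] : E2)‖ = ‖u‖ := by
      rw [← sq_eq_sq₀ (norm_nonneg _) (norm_nonneg _), norm_sq_plane, norm_sq_plane]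
      simp
    rw [hw, norm_smul, hconj, norm_inv, norm_norm, inv_mul_cancel₀ hu']
  let R : E2 →ₗᵢ[ℝ] E2 := ⟨complexMul w, fun z => by rw [norm_complexMul, hw_norm, one_mul]⟩
  refine ⟨R.toLinearIsometryEquiv rfl, ?_, fun v v' => ?_⟩
  · have hsq := norm_sq_plane u
    change complexMul w u = _
    rw [complexMul_apply, hw]
    ext i
    fin_cases i <;> simp <;> field_simp
    · linarith
    · ring
  · change det2 (complexMul w v) (complexMul w v') = _
    rw [det2_complexMul, hw_norm, one_pow, one_mul]

lemma IsLevelHex.diam_le {m b l h₁ h₂ : ℝ} (hL : IsLevelHex m b l h₁ h₂) :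
    diam (levelHex 0 0 l h₁ h₂) ≤ diam (levelHex m b l h₁ h₂) := by
  have hl := hL.length_pos
  have hnorm (x y : ℝ) : ‖(!₂[x, y] : E2)‖ = √(x ^ 2 + y ^ 2) := by
    rw [EuclideanSpace.norm_eq, Fin.sum_univ_two]
    simp
  have hmid : √(0 ^ 2 + h₂ ^ 2) ≤ √(b ^ 2 + h₂ ^ 2) :=
    Real.sqrt_le_sqrt (by nlinarith [sq_nonneg b])
  have hend : √(l ^ 2 + h₁ ^ 2) ≤ max √((m + l) ^ 2 + h₁ ^ 2) √((m - l) ^ 2 + h₁ ^ 2) := by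
    rw [le_max_iff]
    rcases le_total 0 m with hm | hm
    · exact .inl (Real.sqrt_le_sqrt (by nlinarith))
    · exact .inr (Real.sqrt_le_sqrt (by nlinarith))
  rw [levelHex, levelHex, diam_symHex, diam_symHex]
  simp only [Prod.norm_mk, hnorm, zero_add, zero_sub, neg_sq]
  have hend' := hend.trans (max_le_max_left _ (le_max_right √(b ^ 2 + h₂ ^ 2) _))
  gcongr 2 * ?_
  exact max_le hend' (max_le (hmid.trans (le_max_of_le_right (le_max_left ..))) hend')

/-- The points `A`, `B`, `C`, `-A`, `-B`, `-C` are, in counterclockwise order, the vertices of a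
convex hexagon. Consecutive vertices may be aligned with a third one. -/
structure HexPosition (A B C : E2) : Prop where
  det2_pos₁₂ : 0 < det2 A B
  det2_pos₂₃ : 0 < det2 B C
  det2_pos₁₃ : 0 < det2 A C
  det2_le₁₃ : det2 A C ≤ det2 A B + det2 B C
  det2_le₁₂ : det2 A B ≤ det2 B C + det2 A C
  det2_le₂₃ : det2 B C ≤ det2 A C + det2 A B

/-- The hexagon with vertices `A`, `B`, `C`, `-A`, `-B`, `-C` is fixed by Steiner symmetrization
along its diagonal from `A` to `C`. If `B` lies on that diagonal, then `A` and `C` already determine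
the hexagon and the position of `B` is irrelevant. -/
def IsSteinerFixed (A B C : E2) : Prop :=
  ‖A‖ = ‖C‖ ∧ (det2 A C < det2 A B + det2 B C → ⟪B, A - C⟫ = 0)

lemma isSteinerFixed_map_iff {T : E2 ≃ₗᵢ[ℝ] E2} (hT : ∀ v w, det2 (T v) (T w) = det2 v w)
    {A B C : E2} : IsSteinerFixed (T A) (T B) (T C) ↔ IsSteinerFixed A B C := by
  simp only [IsSteinerFixed, hT, ← map_sub, T.norm_map, T.inner_map_map]

lemma IsLevelHex.isSteinerFixed {m b l h₁ h₂ : ℝ} (hL : IsLevelHex m b l h₁ h₂) (hm : m = 0)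
    (hb : h₁ < h₂ → b = 0) : IsSteinerFixed !₂[m + l, h₁] !₂[b, h₂] !₂[m - l, h₁] := by
  subst hm
  refine ⟨?_, fun hlt => ?_⟩
  · rw [← sq_eq_sq₀ (norm_nonneg _) (norm_nonneg _), norm_sq_plane, norm_sq_plane]
    simp
  · have hh : h₁ < h₂ := by
      have hlt' : l * h₁ < l * h₂ := by
        simp only [det2, Matrix.cons_val_zero, Matrix.cons_val_one] at hlt
        linarith
      exact lt_of_mul_lt_mul_left hlt' hL.length_pos.le
    simp [inner_plane, hb hh]

namespace HexPosition

variable {A B C : E2}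

lemma fst_ne_thd (h : HexPosition A B C) : A ≠ C := by
  rintro rfl
  have := h.det2_pos₁₃
  rw [det2] at this
  linarith

lemma rotate (h : HexPosition A B C) : HexPosition B C (-A) where
  det2_pos₁₂ := h.det2_pos₂₃
  det2_pos₂₃ := by simpa only [det2_neg_swap] using h.det2_pos₁₃
  det2_pos₁₃ := by simpa only [det2_neg_swap] using h.det2_pos₁₂
  det2_le₁₃ := by simpa only [det2_neg_swap] using h.det2_le₁₂
  det2_le₁₂ := by simpa only [det2_neg_swap] using h.det2_le₂₃
  det2_le₂₃ := by simpa only [det2_neg_swap] using h.det2_le₁₃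

lemma exists_levelHex (h : HexPosition A B C) : ∃ (T : E2 ≃ₗᵢ[ℝ] E2) (m b l h₁ h₂ : ℝ),
    IsLevelHex m b l h₁ h₂ ∧ (∀ v w, det2 (T v) (T w) = det2 v w) ∧
      T A = !₂[m + l, h₁] ∧ T B = !₂[b, h₂] ∧ T C = !₂[m - l, h₁] := by
  obtain ⟨T, hT, hdet⟩ := exists_rotation (sub_ne_zero.2 h.fst_ne_thd)
  set m := (T A 0 + T C 0) / 2
  set l := ‖A - C‖ / 2 with hl
  have hAC₀ : T A 0 - T C 0 = 2 * l := by
    calc T A 0 - T C 0 = T (A - C) 0 := by rw [map_sub, PiLp.sub_apply]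
      _ = 2 * l := by simp [hT, hl, mul_div_cancel₀]
  have hAC₁ : T A 1 = T C 1 := by
    rw [← sub_eq_zero, ← PiLp.sub_apply, ← map_sub, hT]
    simp
  have hdetAC : det2 A C = 2 * l * T A 1 := by
    rw [← hdet, det2, hAC₁, ← hAC₀]
    ring
  have hdetadd : det2 A B + det2 B C = 2 * l * T B 1 := by
    rw [← hdet A B, ← hdet B C, det2, det2, hAC₁, ← hAC₀]
    ring
  have hdetsub : det2 A B - det2 B C = 2 * (m * T B 1 - T B 0 * T A 1) := by
    rw [← hdet A B, ← hdet B C, det2, det2, hAC₁]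
    ring
  have hlpos : 0 < l := half_pos (norm_pos_iff.2 (sub_ne_zero.2 h.fst_ne_thd))
  refine ⟨T, m, T B 0, l, T A 1, T B 1, ⟨hlpos, ?_, ?_, ?_⟩, hdet, ?_, ?_, ?_⟩
  · have := h.det2_pos₁₃
    rw [hdetAC] at this
    exact pos_of_mul_pos_right this (by positivity)
  · have := h.det2_le₁₃
    rw [hdetAC, hdetadd] at this
    exact le_of_mul_le_mul_left this (by positivity)
  · rw [abs_le]
    constructor <;> linarith [h.det2_le₁₂, h.det2_le₂₃]
  · ext i
    fin_cases i <;> simp [m]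
    linarith
  · ext i
    fin_cases i <;> simp
  · ext i
    fin_cases i <;> simp [m, hAC₁]
    linarith

lemma exists_interaction_lt (h : HexPosition A B C) (hfix : ¬ IsSteinerFixed A B C)
    {κ : ℝ → ℝ≥0∞} (hκ : IsRieszKernel κ) (hs : StrictAntiOn κ (Ioi 0)) :
    ∃ A' B' C' : E2, volume (symHex A' B' C') = volume (symHex A B C) ∧
      diam (symHex A' B' C') ≤ diam (symHex A B C) ∧
      interaction κ (symHex A B C) < interaction κ (symHex A' B' C') := by
  obtain ⟨T, m, b, l, h₁, h₂, hL, hdet, hA, hB, hC⟩ := h.exists_levelHex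
  have himage : T.toAffineIsometryEquiv '' symHex A B C = levelHex m b l h₁ h₂ := by
    rw [levelHex, ← hA, ← hB, ← hC]
    exact linearMap_image_symHex (T : E2 →ₗ[ℝ] E2) A B C
  rw [← volume_image_affineIsometryEquiv T.toAffineIsometryEquiv (symHex A B C),
    ← interaction_image_affineIsometryEquiv κ T.toAffineIsometryEquiv,
    ← T.toAffineIsometryEquiv.isometry.diam_image, himage]
  refine ⟨_, _, _, hL.volume_eq.symm, hL.diam_le, hL.interaction_lt ?_ hκ hs⟩
  contrapose! hfix
  have hfix' := hL.isSteinerFixed hfix.1 hfix.2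
  rwa [← hA, ← hB, ← hC, isSteinerFixed_map_iff hdet] at hfix'

end HexPosition

lemma volume_symHex_eq_zero {A B C : E2} (hAB : det2 A B = 0) (hBC : det2 B C = 0)
    (hAC : det2 A C = 0) : volume (symHex A B C) = 0 := by
  have hspan : Submodule.span ℝ {A, B, C} ≠ ⊤ := by
    intro htop
    have hcomb (P : E2) : ∃ x y z : ℝ, x • A + y • B + z • C = P :=
      Submodule.mem_span_triple.1 (htop ▸ Submodule.mem_top)
    obtain ⟨x, y, z, hP⟩ := hcomb !₂[1, 0]
    obtain ⟨x', y', z', hQ⟩ := hcomb !₂[0, 1]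
    have hdet : det2 !₂[1, 0] !₂[0, 1] = 1 := by simp [det2]
    rw [← hP, ← hQ] at hdet
    simp only [det2, PiLp.add_apply, PiLp.smul_apply, smul_eq_mul] at hdet hAB hBC hAC
    refine zero_ne_one (α := ℝ) ?_
    linear_combination hdet - (x * y' - y * x') * hAB - (y * z' - z * y') * hBC -
      (x * z' - z * x') * hAC
  refine measure_mono_null (fun z hz => ?_) (Measure.addHaar_submodule volume _ hspan)
  obtain ⟨s, t, u, -, hz⟩ := mem_symHex_iff.1 hz
  exact Submodule.mem_span_triple.2 ⟨s, t, u, hz⟩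

lemma hexPosition_midpoint {A C : E2} (h : 0 < det2 A C) :
    HexPosition A ((1 / 2 : ℝ) • A + (1 / 2 : ℝ) • C) C := by
  have hA : det2 A ((1 / 2 : ℝ) • A + (1 / 2 : ℝ) • C) = det2 A C / 2 := by
    simp only [det2, PiLp.add_apply, PiLp.smul_apply, smul_eq_mul]
    ring
  have hC : det2 ((1 / 2 : ℝ) • A + (1 / 2 : ℝ) • C) C = det2 A C / 2 := by
    simp only [det2, PiLp.add_apply, PiLp.smul_apply, smul_eq_mul]
    ring
  constructor <;> linarith

section Representation

variable {A B C : E2}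

lemma symHex_eq_of_mem {B' : E2} (hB : B ∈ symHex A B' C) (hB' : B' ∈ symHex A B C) :
    symHex A B' C = symHex A B C := by
  refine Subset.antisymm ((symHex_subset_iff absConvex_symHex).2 ?_)
    ((symHex_subset_iff absConvex_symHex).2 ?_)
  · exact ⟨vertices_mem_symHex.1, hB', vertices_mem_symHex.2.2⟩
  · exact ⟨vertices_mem_symHex.1, hB, vertices_mem_symHex.2.2⟩

lemma exists_hexPosition_of_add_le (hAB : 0 ≤ det2 A B) (hBC : 0 ≤ det2 B C)
    (hAC : 0 < det2 A C) (h : det2 A B + det2 B C ≤ det2 A C) :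
    ∃ A' B' C' : E2, HexPosition A' B' C' ∧ symHex A' B' C' = symHex A B C := by
  have hmem {s t : ℝ} (hs : 0 ≤ s) (ht : 0 ≤ t) (hst : s + t ≤ 1) (X : E2) :
      s • A + t • C ∈ symHex A X C := by
    have := smul_add_smul_add_smul_mem_symHex (A := A) (B := X) (C := C) (s := s) (t := 0) (u := t)
      (by rwa [abs_of_nonneg hs, abs_zero, abs_of_nonneg ht, add_zero])
    rwa [zero_smul, add_zero] at this
  have hB : B = (det2 B C / det2 A C) • A + (det2 A B / det2 A C) • C := by
    rw [div_eq_inv_mul, div_eq_inv_mul, mul_smul, mul_smul, ← smul_add, ← det2_smul_eq_add,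
      inv_smul_smul₀ hAC.ne']
  refine ⟨A, _, C, hexPosition_midpoint hAC, symHex_eq_of_mem ?_ ?_⟩
  · rw [hB]
    refine hmem (by positivity) (by positivity) ?_ _
    rw [← add_div, div_le_one hAC]
    linarith
  · exact hmem (by norm_num) (by norm_num) (by norm_num) _

lemma exists_hexPosition_of_nonneg (hAB : 0 ≤ det2 A B) (hBC : 0 ≤ det2 B C) (hAC : 0 ≤ det2 A C)
    (hvol : volume (symHex A B C) ≠ 0) :
    ∃ A' B' C' : E2, HexPosition A' B' C' ∧ symHex A' B' C' = symHex A B C := by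
  have hpos : 0 < det2 A B + det2 B C + det2 A C := by
    by_contra! hle
    exact hvol (volume_symHex_eq_zero (by linarith) (by linarith) (by linarith))
  rcases le_or_gt (det2 A B + det2 B C) (det2 A C) with hACle | hAClt
  · exact exists_hexPosition_of_add_le hAB hBC (by linarith) hACle
  rcases le_or_gt (det2 B C + det2 A C) (det2 A B) with hABle | hABlt
  · rw [← symHex_rotate]
    exact exists_hexPosition_of_add_le hBC (by rwa [det2_neg_swap])
      (by rw [det2_neg_swap]; linarith) (by rwa [det2_neg_swap, det2_neg_swap])
  rcases le_or_gt (det2 A C + det2 A B) (det2 B C) with hBCle | hBClt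
  · rw [← symHex_rotate, ← symHex_rotate]
    apply exists_hexPosition_of_add_le <;> simp only [det2_neg_swap] <;> linarith
  · exact ⟨A, B, C, by constructor <;> linarith, rfl⟩

lemma exists_hexPosition (hvol : volume (symHex A B C) ≠ 0) :
    ∃ A' B' C' : E2, HexPosition A' B' C' ∧ symHex A' B' C' = symHex A B C := by
  wlog hAB : 0 ≤ det2 A B generalizing B
  · rw [← symHex_neg_mid] at hvol ⊢
    refine this hvol ?_
    rw [det2_neg_right]
    linarith
  wlog hAC : 0 ≤ det2 A C generalizing C
  · rw [← symHex_neg_right] at hvol ⊢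
    refine this hvol ?_
    rw [det2_neg_right]
    linarith
  rcases le_total 0 (det2 B C) with hBC | hBC
  · exact exists_hexPosition_of_nonneg hAB hBC hAC hvol
  · rw [← symHex_swap_right] at hvol ⊢
    refine exists_hexPosition_of_nonneg hAC ?_ hAB hvol
    rw [det2_swap]
    linarith

end Representation

lemma stdHexagon_eq_symHex :
    stdHexagon = symHex !₂[1, 0] !₂[1 / 2, √3 / 2] !₂[-(1 / 2), √3 / 2] := by
  have h₀ : hexVertex 0 = !₂[1, 0] := by simp [hexVertex]
  have h₁ : hexVertex 1 = !₂[1 / 2, √3 / 2] := by simp [hexVertex]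
  have h₂ : hexVertex 2 = !₂[-(1 / 2), √3 / 2] := by
    have harg : ((2 : ℕ) : ℝ) * π / 3 = π - π / 3 := by
      push_cast
      ring
    rw [hexVertex, harg]
    simp
  have hopp (n : ℕ) : hexVertex (n + 3) = -hexVertex n := by
    have harg : ((n + 3 : ℕ) : ℝ) * π / 3 = n * π / 3 + π := by
      push_cast
      ring
    rw [hexVertex, hexVertex, harg, cos_add_pi, sin_add_pi]
    ext i
    fin_cases i <;> simp
  have h₃ : hexVertex 3 = -hexVertex 0 := hopp 0
  have h₄ : hexVertex 4 = -hexVertex 1 := hopp 1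
  have h₅ : hexVertex 5 = -hexVertex 2 := hopp 2
  rw [stdHexagon, symHex_eq_convexHull, ← h₀, ← h₁, ← h₂, ← h₃, ← h₄, ← h₅]
  congr 1
  ext z
  simp [Fin.exists_fin_succ, eq_comm]

lemma complexMul_eq_of_inner_det2 {u v : E2} (hu : u ≠ 0) {x y : ℝ} (hx : ⟪u, v⟫ = ‖u‖ ^ 2 * x)
    (hy : det2 u v = ‖u‖ ^ 2 * y) : complexMul u !₂[x, y] = v := by
  have hsmul : (!₂[⟪u, v⟫, det2 u v] : E2) = ‖u‖ ^ 2 • !₂[x, y] := by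
    rw [hx, hy]
    ext i
    fin_cases i <;> simp
  have hmul := complexMul_inner_det2 u v
  rw [hsmul, map_smul] at hmul
  exact smul_right_injective _ (pow_ne_zero 2 (norm_ne_zero_iff.2 hu)) hmul

namespace HexPosition

variable {A B C : E2}

lemma det2_lt_of_norm_eq (h : HexPosition A B C) (hAC : ‖A‖ = ‖C‖) (hAB : ‖A‖ = ‖B‖) :
    det2 A C < det2 A B + det2 B C := by
  have hray : ¬ SameRay ℝ (det2 B C • A) (det2 A B • C) := by
    intro hray
    have hAC' := (hray.pos_smul_left (inv_pos.2 h.det2_pos₂₃)).pos_smul_right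
      (inv_pos.2 h.det2_pos₁₂)
    rw [inv_smul_smul₀ h.det2_pos₂₃.ne', inv_smul_smul₀ h.det2_pos₁₂.ne',
      sameRay_iff_of_norm_eq hAC] at hAC'
    exact h.fst_ne_thd hAC'
  have hlt : det2 A C * ‖A‖ < (det2 A B + det2 B C) * ‖A‖ :=
    calc det2 A C * ‖A‖ = ‖det2 B C • A + det2 A B • C‖ := by
          rw [← det2_smul_eq_add, norm_smul, Real.norm_of_nonneg h.det2_pos₁₃.le, hAB]
      _ < ‖det2 B C • A‖ + ‖det2 A B • C‖ := not_sameRay_iff_norm_add_lt.1 hray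
      _ = (det2 A B + det2 B C) * ‖A‖ := by
          rw [norm_smul, norm_smul, Real.norm_of_nonneg h.det2_pos₂₃.le,
            Real.norm_of_nonneg h.det2_pos₁₂.le, ← hAC]
          ring
  exact lt_of_mul_lt_mul_right hlt (norm_nonneg A)

lemma inner_eq_inner (h : HexPosition A B C) (hfix : IsSteinerFixed A B C) (hAB : ‖A‖ = ‖B‖) :
    ⟪B, A⟫ = ⟪B, C⟫ := by
  rw [← sub_eq_zero, ← inner_sub_right]
  exact hfix.2 (h.det2_lt_of_norm_eq hfix.1 hAB)

lemma fst_ne_zero (h : HexPosition A B C) : A ≠ 0 := by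
  rintro rfl
  simpa [det2] using h.det2_pos₁₂

lemma inner_det2_of_isSteinerFixed (h : HexPosition A B C) (hfix : IsSteinerFixed A B C)
    (hfix' : IsSteinerFixed B C (-A)) :
    (⟪A, B⟫ = ‖A‖ ^ 2 * (1 / 2) ∧ det2 A B = ‖A‖ ^ 2 * (√3 / 2)) ∧
      ⟪A, C⟫ = ‖A‖ ^ 2 * -(1 / 2) ∧ det2 A C = ‖A‖ ^ 2 * (√3 / 2) := by
  have hA := h.fst_ne_zero
  have hAC : ‖A‖ = ‖C‖ := hfix.1
  have hAB : ‖A‖ = ‖B‖ := by simpa using hfix'.1.symm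
  have hinner := h.inner_eq_inner hfix hAB
  have hinner' := h.rotate.inner_eq_inner hfix' (hAB.symm.trans hAC)
  rw [inner_neg_right, real_inner_comm, real_inner_comm A C] at hinner'
  rw [real_inner_comm] at hinner
  have hdetAB : det2 A B ^ 2 + ⟪A, C⟫ ^ 2 = ‖A‖ ^ 2 * ‖A‖ ^ 2 := by
    rw [← neg_sq ⟪A, C⟫, ← hinner', ← hinner, det2_sq_add_inner_sq, hAB]
  have hdetBC : det2 B C ^ 2 + ⟪A, C⟫ ^ 2 = ‖A‖ ^ 2 * ‖A‖ ^ 2 := by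
    rw [← neg_sq ⟪A, C⟫, ← hinner', det2_sq_add_inner_sq, ← hAB, ← hAC]
  have hdetAC : det2 A C ^ 2 + ⟪A, C⟫ ^ 2 = ‖A‖ ^ 2 * ‖A‖ ^ 2 := by
    rw [det2_sq_add_inner_sq, ← hAC]
  have hABAC : det2 A B = det2 A C :=
    (sq_eq_sq₀ h.det2_pos₁₂.le h.det2_pos₁₃.le).1 (by linarith)
  have hBCAC : det2 B C = det2 A C :=
    (sq_eq_sq₀ h.det2_pos₂₃.le h.det2_pos₁₃.le).1 (by linarith)
  have hB : B = A + C := by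
    have := det2_smul_eq_add A B C
    rw [hABAC, hBCAC, ← smul_add] at this
    exact smul_right_injective _ h.det2_pos₁₃.ne' this
  have hinnerAC : ⟪A, C⟫ = ‖A‖ ^ 2 * -(1 / 2) := by
    have : ⟪A, B⟫ = ‖A‖ ^ 2 + ⟪A, C⟫ := by rw [hB, inner_add_right, real_inner_self_eq_norm_sq]
    linarith
  have hdet : det2 A C = ‖A‖ ^ 2 * (√3 / 2) := by
    rw [← sq_eq_sq₀ h.det2_pos₁₃.le (by positivity), mul_pow, div_pow, Real.sq_sqrt (by norm_num)]
    rw [hinnerAC] at hdetAC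
    linarith
  exact ⟨⟨by linarith, hABAC.trans hdet⟩, hinnerAC, hdet⟩

lemma isRegularHexagon (h : HexPosition A B C) (hfix : IsSteinerFixed A B C)
    (hfix' : IsSteinerFixed B C (-A)) : IsRegularHexagon (symHex A B C) := by
  obtain ⟨⟨hAB, hAB'⟩, hAC, hAC'⟩ := h.inner_det2_of_isSteinerFixed hfix hfix'
  have hA : complexMul A !₂[1, 0] = A := by
    rw [complexMul_apply]
    ext i
    fin_cases i <;> simp
  refine ⟨complexMul A, ⟨‖A‖, norm_pos_iff.2 h.fst_ne_zero, fun x y => ?_⟩, ?_⟩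
  · rw [dist_eq_norm, ← map_sub, norm_complexMul, dist_eq_norm]
  · rw [stdHexagon_eq_symHex, linearMap_image_symHex, hA,
      complexMul_eq_of_inner_det2 h.fst_ne_zero hAB hAB',
      complexMul_eq_of_inner_det2 h.fst_ne_zero hAC hAC']

end HexPosition

lemma exists_interaction_lt_symHex {κ : ℝ → ℝ≥0∞} (hκ : IsRieszKernel κ)
    (hs : StrictAntiOn κ (Ioi 0)) {A B C : E2} (hvol : volume (symHex A B C) ≠ 0)
    (hreg : ¬ IsRegularHexagon (symHex A B C)) :
    ∃ A' B' C' : E2, volume (symHex A' B' C') = volume (symHex A B C) ∧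
      diam (symHex A' B' C') ≤ diam (symHex A B C) ∧
      interaction κ (symHex A B C) < interaction κ (symHex A' B' C') := by
  obtain ⟨A₁, B₁, C₁, h, hsymm⟩ := exists_hexPosition hvol
  rw [← hsymm] at hreg ⊢
  by_cases hfix : IsSteinerFixed A₁ B₁ C₁
  · rw [← symHex_rotate]
    exact h.rotate.exists_interaction_lt (fun hfix' => hreg (h.isRegularHexagon hfix hfix')) hκ hs
  · exact h.exists_interaction_lt hfix hκ hs

lemma Hex.exists_eq_image_symHex {H : Set E2} (hH : Hex H) :
    ∃ x₀ p q r : E2, H = AffineIsometryEquiv.constVAdd ℝ E2 x₀ '' symHex p q r := by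
  obtain ⟨⟨x₀, p, q, r, rfl⟩, -⟩ := hH
  exact ⟨x₀, p, q, r, by rw [symHex_eq_convexHull]; rfl⟩

lemma Hex.isCompact {H : Set E2} (hH : Hex H) : IsCompact H := by
  obtain ⟨x₀, p, q, r, rfl⟩ := hH.exists_eq_image_symHex
  exact isCompact_symHex.image (AffineIsometryEquiv.continuous _)

lemma Hex.volume_ne_zero {H : Set E2} (hH : Hex H) : volume H ≠ 0 :=
  (Measure.measure_pos_of_nonempty_interior volume hH.2).ne'

lemma hex_symHex {p q r : E2} (hvol : volume (symHex p q r) ≠ 0) : Hex (symHex p q r) := by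
  refine ⟨⟨0, p, q, r, by simp only [zero_add, image_id', symHex_eq_convexHull]⟩, ?_⟩
  contrapose! hvol
  refine measure_mono_null (fun z hz => ?_)
    ((convex_symHex (A := p) (B := q) (C := r)).addHaar_frontier volume)
  exact ⟨subset_closure hz, hvol ▸ notMem_empty z⟩

lemma IsRegularHexagon.image_affineIsometryEquiv {H : Set E2} (hH : IsRegularHexagon H)
    (T : E2 ≃ᵃⁱ[ℝ] E2) : IsRegularHexagon (T '' H) := by
  obtain ⟨f, ⟨s, hs, hf⟩, rfl⟩ := hH
  exact ⟨T ∘ f, ⟨s, hs, fun x y => (T.dist_map _ _).trans (hf x y)⟩, (image_comp _ _ _).symm⟩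

open scoped Pointwise in
lemma IsRegularHexagon.exists_eq_image_smul {H : Set E2} (hH : IsRegularHexagon H) :
    ∃ s : ℝ, 0 < s ∧ ∃ T : E2 ≃ᵃⁱ[ℝ] E2, H = T '' (s • stdHexagon) := by
  obtain ⟨f, ⟨s, hs, hf⟩, rfl⟩ := hH
  have hiso : Isometry fun x => f (s⁻¹ • x) := Isometry.of_dist_eq fun x y => by
    rw [hf, dist_smul₀, Real.norm_of_nonneg (inv_nonneg.2 hs.le), mul_inv_cancel_left₀ hs.ne']
  refine ⟨s, hs, hiso.affineIsometryOfStrictConvexSpace.toAffineIsometryEquiv rfl, ?_⟩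
  rw [AffineIsometry.coe_toAffineIsometryEquiv, Isometry.coe_affineIsometryOfStrictConvexSpace,
    ← image_smul, image_image]
  simp only [inv_smul_smul₀ hs.ne']

lemma isCompact_stdHexagon : IsCompact stdHexagon :=
  stdHexagon_eq_symHex ▸ isCompact_symHex

lemma IsRegularHexagon.isCompact {H : Set E2} (hH : IsRegularHexagon H) : IsCompact H := by
  obtain ⟨s, -, T, rfl⟩ := hH.exists_eq_image_smul
  exact (isCompact_stdHexagon.smul s).image T.continuous

lemma IsRegularHexagon.interaction_eq {H H' : Set E2} (κ : ℝ → ℝ≥0∞) (hH : IsRegularHexagon H)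
    (hH' : IsRegularHexagon H') (hvol : volume H = volume H') (hvol₀ : volume H ≠ 0) :
    interaction κ H = interaction κ H' := by
  obtain ⟨s, hs, T, rfl⟩ := hH.exists_eq_image_smul
  obtain ⟨s', hs', T', rfl⟩ := hH'.exists_eq_image_smul
  rw [interaction_image_affineIsometryEquiv, interaction_image_affineIsometryEquiv]
  rw [volume_image_affineIsometryEquiv, Measure.addHaar_smul_of_nonneg _ hs.le] at hvol hvol₀
  rw [volume_image_affineIsometryEquiv, Measure.addHaar_smul_of_nonneg _ hs'.le,
    ENNReal.mul_left_inj (right_ne_zero_of_mul hvol₀) isCompact_stdHexagon.measure_lt_top.ne,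
    ENNReal.ofReal_eq_ofReal_iff (by positivity) (by positivity), finrank_euclideanSpace_fin,
    sq_eq_sq₀ hs.le hs'.le] at hvol
  rw [hvol]

namespace IsRieszKernel

variable {κ : ℝ → ℝ≥0∞}

lemma exists_hex_interaction_lt (hκ : IsRieszKernel κ) (hs : StrictAntiOn κ (Ioi 0)) {H : Set E2}
    (hH : Hex H) (hreg : ¬ IsRegularHexagon H) :
    ∃ H', Hex H' ∧ volume H' = volume H ∧ interaction κ H < interaction κ H' := by
  have hvol := hH.volume_ne_zero
  obtain ⟨x₀, p, q, r, rfl⟩ := hH.exists_eq_image_symHex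
  rw [volume_image_affineIsometryEquiv] at hvol
  rw [volume_image_affineIsometryEquiv, interaction_image_affineIsometryEquiv]
  obtain ⟨p', q', r', hvol', -, hlt⟩ := exists_interaction_lt_symHex hκ hs hvol
    fun h => hreg (h.image_affineIsometryEquiv _)
  exact ⟨_, hex_symHex (hvol'.trans_ne hvol), hvol', hlt⟩

lemma exists_isRegularHexagon_interaction_le (hκ : IsRieszKernel κ)
    (hs : StrictAntiOn κ (Ioi 0)) {p q r : E2} (hvol : volume (symHex p q r) ≠ 0) :
    ∃ H, IsRegularHexagon H ∧ volume H = volume (symHex p q r) ∧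
      interaction κ (symHex p q r) ≤ interaction κ H := by
  have hcompact : IsCompact (closedBall (0 : E2 × E2 × E2) ‖(p, q, r)‖ ∩
      {v | volume (symHex v.1 v.2.1 v.2.2) = volume (symHex p q r)}) :=
    (isCompact_closedBall _ _).inter_right
      (isClosed_singleton.preimage (continuous_measure_symHex volume))
  obtain ⟨⟨A, B, C⟩, ⟨hnorm, hABC⟩, hmax⟩ := hcompact.exists_isMaxOn
    ⟨(p, q, r), mem_closedBall_zero_iff.2 le_rfl, rfl⟩ hκ.continuous_interaction_symHex.continuousOn
  refine ⟨symHex A B C, ?_, hABC, hmax ⟨mem_closedBall_zero_iff.2 le_rfl, rfl⟩⟩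
  by_contra hreg
  obtain ⟨A', B', C', hvol', hdiam, hlt⟩ :=
    exists_interaction_lt_symHex hκ hs (hvol := ne_of_eq_of_ne hABC hvol) hreg
  rw [diam_symHex, diam_symHex, mul_le_mul_iff_right₀ two_pos] at hdiam
  have hnorm' : (A', B', C') ∈ closedBall (0 : E2 × E2 × E2) ‖(p, q, r)‖ :=
    mem_closedBall_zero_iff.2 (hdiam.trans (mem_closedBall_zero_iff.1 hnorm))
  exact (hmax ⟨hnorm', hvol'.trans hABC⟩).not_gt hlt

lemma interaction_le_of_strictAntiOn (hκ : IsRieszKernel κ) (hs : StrictAntiOn κ (Ioi 0))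
    {H Hstar : Set E2} (hH : Hex H) (hreg : IsRegularHexagon Hstar)
    (hvol : volume H = volume Hstar) : interaction κ H ≤ interaction κ Hstar := by
  have hvol₀ := hH.volume_ne_zero
  obtain ⟨x₀, p, q, r, rfl⟩ := hH.exists_eq_image_symHex
  rw [volume_image_affineIsometryEquiv] at hvol hvol₀
  rw [interaction_image_affineIsometryEquiv]
  obtain ⟨H₁, hreg₁, hvol₁, hle⟩ := hκ.exists_isRegularHexagon_interaction_le hs hvol₀
  exact hle.trans_eq (hreg₁.interaction_eq κ hreg (hvol₁.trans hvol) (hvol₁.trans_ne hvol₀))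

lemma interaction_le (hκ : IsRieszKernel κ) {H Hstar : Set E2} (hH : Hex H)
    (hreg : IsRegularHexagon Hstar) (hvol : volume H = volume Hstar) :
    interaction κ H ≤ interaction κ Hstar := by
  refine ENNReal.le_of_forall_pos_le_add fun ε hε _ => ?_
  have hfin : volume Hstar ≠ ⊤ := hreg.isCompact.measure_lt_top.ne
  obtain ⟨δ, hδ, hδε⟩ := ENNReal.exists_nnreal_pos_mul_lt (ENNReal.mul_ne_top hfin hfin)
    (ENNReal.coe_ne_zero.2 hε.ne')
  calc interaction κ H
      ≤ interaction (fun r => κ r + δ * ENNReal.ofReal (exp (-r))) H :=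
        interaction_mono (fun _ => le_self_add) H
    _ ≤ interaction (fun r => κ r + δ * ENNReal.ofReal (exp (-r))) Hstar :=
        (hκ.add_exp δ).interaction_le_of_strictAntiOn (hκ.strictAntiOn_add_exp hδ) hH hreg hvol
    _ ≤ interaction κ Hstar + δ * volume Hstar * volume Hstar := interaction_add_exp_le κ δ Hstar
    _ ≤ interaction κ Hstar + ε := by
        rw [mul_assoc]
        gcongr

end IsRieszKernel

/-- The profile `k` of a Riesz-type energy as a kernel for `interaction`. Only the values of `k` on
`(0, ∞)` matter; the value `∞` elsewhere makes the kernel nonincreasing on all of `ℝ`. -/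
def radialKernel (k : ℝ → ℝ) (r : ℝ) : ℝ≥0∞ :=
  if 0 < r then ENNReal.ofReal (k r) else ⊤

section RadialKernel

variable {k : ℝ → ℝ}

lemma radialKernel_of_pos {r : ℝ} (hr : 0 < r) : radialKernel k r = ENNReal.ofReal (k r) :=
  if_pos hr

lemma antitone_radialKernel (hmono : AntitoneOn k (Ioi 0)) : Antitone (radialKernel k) := by
  intro r s hrs
  rcases le_or_gt r 0 with hr | hr
  · exact le_top.trans_eq (if_neg hr.not_gt).symm
  · have hs := hr.trans_le hrs
    rw [radialKernel_of_pos hr, radialKernel_of_pos hs]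
    exact ENNReal.ofReal_le_ofReal (hmono hr hs hrs)

lemma strictAntiOn_radialKernel (hs : StrictAntiOn k (Ioi 0)) (hpos : ∀ r, 0 < r → 0 ≤ k r) :
    StrictAntiOn (radialKernel k) (Ioi 0) := by
  intro r hr s hs' hrs
  have hlt := hs hr hs' hrs
  rw [radialKernel_of_pos hr, radialKernel_of_pos hs',
    ENNReal.ofReal_lt_ofReal_iff ((hpos s hs').trans_lt hlt)]
  exact hlt

lemma integrableOn_Ioo_of_antitoneOn (hmono : AntitoneOn k (Ioi 0))
    (hint : IntegrableOn k (Ioc 0 1)) (ρ : ℝ) : IntegrableOn k (Ioo 0 ρ) := by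
  have htail : IntegrableOn k (Icc 1 ρ) :=
    (hmono.mono fun _ hx => one_pos.trans_le hx.1).integrableOn_isCompact isCompact_Icc
  refine (hint.union htail).mono_set fun x hx => ?_
  rcases le_total x 1 with h | h
  exacts [.inl ⟨hx.1, h⟩, .inr ⟨h, hx.2.le⟩]

lemma isRieszKernel_radialKernel (hmono : AntitoneOn k (Ioi 0))
    (hint : IntegrableOn k (Ioc 0 1)) : IsRieszKernel (radialKernel k) where
  antitone := antitone_radialKernel hmono
  lintegral_ball_lt_top ρ := by
    have hpolar : IntegrableOn (fun r => r ^ (Module.finrank ℝ E2 - 1) • k r) (Ioo 0 ρ) := by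
      rw [finrank_euclideanSpace_fin]
      exact (integrableOn_Ioo_of_antitoneOn hmono hint ρ).continuousOn_mul_of_subset
        (by fun_prop) isCompact_Icc measurableSet_Ioo Ioo_subset_Icc_self
    refine lt_of_le_of_lt (lintegral_mono_ae (ae_restrict_of_ae ?_))
      ((integrableOn_fun_norm_addHaar (E := E2) volume).2 hpolar).2
    filter_upwards [Measure.ae_ne volume 0] with z hz
    rw [radialKernel_of_pos (norm_pos_iff.2 hz)]
    exact Real.ofReal_le_enorm _

lemma integral_eq_toReal_lintegral_radialKernel (hmono : AntitoneOn k (Ioi 0))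
    (hpos : ∀ r, 0 < r → 0 ≤ k r) (hint : IntegrableOn k (Ioc 0 1)) {H : Set E2}
    (hH : Bornology.IsBounded H) (x : E2) :
    ∫ y in H, k (dist x y) = (∫⁻ y in H, radialKernel k (dist x y)).toReal := by
  have hκ := isRieszKernel_radialKernel hmono hint
  have hκm := hκ.measurable
  rw [← integral_toReal (by fun_prop) (ae_lt_top (by fun_prop) (hκ.lintegral_ne_top hH x))]
  refine integral_congr_ae (ae_restrict_of_ae ?_)
  filter_upwards [Measure.ae_ne volume x] with y hy
  have hdist : 0 < dist x y := dist_pos.2 hy.symm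
  rw [radialKernel_of_pos hdist, ENNReal.toReal_ofReal (hpos _ hdist)]

lemma rieszEnergy_eq_neg_toReal_interaction (hmono : AntitoneOn k (Ioi 0))
    (hpos : ∀ r, 0 < r → 0 ≤ k r) (hint : IntegrableOn k (Ioc 0 1)) {H : Set E2}
    (hH : Bornology.IsBounded H) :
    rieszEnergy k H = -(interaction (radialKernel k) H).toReal := by
  have hκ := isRieszKernel_radialKernel hmono hint
  simp only [rieszEnergy, interaction,
    integral_eq_toReal_lintegral_radialKernel hmono hpos hint hH]
  rw [integral_toReal (hκ.measurable_lintegral H).aemeasurable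
    (ae_of_all _ fun x => (hκ.lintegral_ne_top hH x).lt_top)]

lemma rieszEnergy_le_iff (hmono : AntitoneOn k (Ioi 0)) (hpos : ∀ r, 0 < r → 0 ≤ k r)
    (hint : IntegrableOn k (Ioc 0 1)) {H H' : Set E2} (hH : Bornology.IsBounded H)
    (hH' : Bornology.IsBounded H') :
    rieszEnergy k H ≤ rieszEnergy k H' ↔
      interaction (radialKernel k) H' ≤ interaction (radialKernel k) H := by
  have hκ := isRieszKernel_radialKernel hmono hint
  rw [rieszEnergy_eq_neg_toReal_interaction hmono hpos hint hH,
    rieszEnergy_eq_neg_toReal_interaction hmono hpos hint hH', neg_le_neg_iff,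
    ENNReal.toReal_le_toReal (hκ.interaction_ne_top hH') (hκ.interaction_ne_top hH)]

end RadialKernel

theorem statement11_general (k : ℝ → ℝ)
    (hmono : AntitoneOn k (Set.Ioi (0 : ℝ)))
    (hpos : ∀ r : ℝ, 0 < r → 0 ≤ k r)
    (hint : MeasureTheory.IntegrableOn k (Set.Ioc (0 : ℝ) 1)) :
    (∀ Hstar : Set E2, IsRegularHexagon Hstar → volume Hstar = 1 →
      ∀ H : Set E2, Hex H → volume H = 1 → rieszEnergy k Hstar ≤ rieszEnergy k H) ∧
    (StrictAntiOn k (Set.Ioi (0 : ℝ)) →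
      ∀ H : Set E2, Hex H → volume H = 1 →
        (∀ H' : Set E2, Hex H' → volume H' = 1 → rieszEnergy k H ≤ rieszEnergy k H') →
        IsRegularHexagon H) := by
  have hκ := isRieszKernel_radialKernel hmono hint
  constructor
  · intro Hstar hreg hvol H hH hvolH
    rw [rieszEnergy_le_iff hmono hpos hint hreg.isCompact.isBounded hH.isCompact.isBounded]
    exact hκ.interaction_le hH hreg (hvolH.trans hvol.symm)
  · intro hs H hH hvol hmin
    by_contra hreg
    obtain ⟨H', hH', hvol', hlt⟩ :=
      hκ.exists_hex_interaction_lt (strictAntiOn_radialKernel hs hpos) hH hreg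
    have hle := hmin H' hH' (hvol'.trans hvol)
    rw [rieszEnergy_le_iff hmono hpos hint hH.isCompact.isBounded hH'.isCompact.isBounded] at hle
    exact hle.not_gt hlt

/-- For a nonnegative, nonincreasing, locally integrable, positive
definite radial kernel the regular hexagon minimizes the Riesz-type energy
`𝓡(E) = −∫_E∫_E K(x−y)` among unit-area elements of `𝓗`; if moreover `k` is strictly
decreasing on `(0, ∞)`, every minimizer is a regular hexagon. -/
theorem statement11 (k : ℝ → ℝ)
    (hmono : AntitoneOn k (Set.Ioi (0 : ℝ)))
    (hpos : ∀ r : ℝ, 0 < r → 0 ≤ k r)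
    (hint : MeasureTheory.IntegrableOn k (Set.Ioc (0 : ℝ) 1))
    (hposdef : ∀ f : E2 → ℝ, Continuous f → HasCompactSupport f →
      0 ≤ ∫ x : E2, ∫ y : E2, k (dist x y) * f x * f y) :
    (∀ Hstar : Set E2, IsRegularHexagon Hstar → volume Hstar = 1 →
      ∀ H : Set E2, Hex H → volume H = 1 → rieszEnergy k Hstar ≤ rieszEnergy k H) ∧
    (StrictAntiOn k (Set.Ioi (0 : ℝ)) →
      ∀ H : Set E2, Hex H → volume H = 1 →
        (∀ H' : Set E2, Hex H' → volume H' = 1 → rieszEnergy k H ≤ rieszEnergy k H') →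
        IsRegularHexagon H) :=
  statement11_general k hmono hpos hint
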